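/- arXiv:2006.06757 — 4 statements merged into one kernel-verified Lean document; each statement's English description precedes it below -/
import Mathlib

section
/- Let A be a ring such that the Laurent series ring A((x)) is a right semidistributive semilocal ring. Then A is a right semidistributive right Artinian ring. -/
/-- A module is *distributive* if its lattice of submodules is distributive, i.e.
`X ⊓ (Y ⊔ Z) = (X ⊓ Y) ⊔ (X ⊓ Z)` for all submodules `X, Y, Z`. -/
def IsDistribModule (R M : Type*) [Ring R] [AddCommGroup M] [Module R M] : Prop :=
  ∀ X Y Z : Submodule R M, X ⊓ (Y ⊔ Z) = X ⊓ Y ⊔ X ⊓ Z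

/-- A ring `A` is *right semidistributive* if, as a right module over itself
(i.e. as an `Aᵐᵒᵖ`-module), it is a direct sum of distributive submodules. -/
def IsRightSemidistributiveRing (A : Type*) [Ring A] : Prop :=
  ∃ (ι : Type) (N : ι → Submodule Aᵐᵒᵖ A),
    iSupIndep N ∧ iSup N = ⊤ ∧ ∀ i, IsDistribModule Aᵐᵒᵖ (N i)

/-- A ring `R` is *semilocal* if `R` modulo its Jacobson radical is a semisimple ring. -/
def IsSemilocalRing (R : Type*) [Ring R] : Prop :=
  IsSemisimpleModule R (R ⧸ Ideal.jacobson (⊥ : Ideal R))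

/-!
Passing to opposite rings, consider left ideals and let `L = R((x))`. Coefficientwise extension
`I ↦ I((x))` embeds the lattice of left ideals of `R` into that of `L` and preserves maximality,
so `J(L) ⊆ J(R)((x))` and `R` is semilocal. Modulo `J(L)`, the central elements
`x, x², x³, …` have invertible differences, so for `a ∈ J(R)` some `xⁿ - a` is invertible in `L`.
The coefficients of its inverse are, up to a unit, the powers of `a`; hence `a` is nilpotent, and
`R` has a complete system of orthogonal local idempotents `e`.

If `R` is not Noetherian, an ascending chain of left ideals yields lacunary series
`f = ∑ aₖ x^(k²)`, and distributing the `aₖ` among `m` such series shows that the direct sum of `m`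
copies of one simple module is a subquotient of `L`. A distributive module has no subquotient of
the form `T ⊕ T` with `T ≠ 0`, which bounds `m` by the number of distributive summands of `L`. So
`R` is Noetherian, its nil radical `J(R)` is nilpotent by Levitzki's theorem, and `R` is Artinian.
Then `J(L) = J(R)((x))`, each `e` remains a local idempotent of `L`, and so `Le` embeds into one of
the distributive summands; restricting to the left ideals `I((x))` shows that `Re` is distributive.
-/

section JacobsonRadical

variable {R S : Type*} [Ring R] [Ring S]

theorem isUnit_one_add_of_mem_jacobson {j : R} (hj : j ∈ Ring.jacobson R) : IsUnit (1 + j) := by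
  have left_inverse {k : R} (hk : k ∈ Ring.jacobson R) : ∃ r, r * (1 + k) = 1 := by
    rw [← Ideal.jacobson_bot] at hk
    obtain ⟨r, hr⟩ := Ideal.exists_mul_add_sub_mem_of_mem_jacobson k hk
    exact ⟨r, by rw [add_comm]; exact sub_eq_zero.mp hr⟩
  obtain ⟨r, hr⟩ := left_inverse hj
  obtain ⟨s, hs⟩ := left_inverse (k := r - 1) <| by
    have hrj : r - 1 = -r * j := by rw [← hr]; noncomm_ring
    exact hrj ▸ Ideal.mul_mem_left _ (-r) hj
  rw [add_sub_cancel] at hs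
  exact ⟨⟨1 + j, r, left_inv_eq_right_inv hs hr ▸ hs, hr⟩, rfl⟩

theorem le_jacobson_of_forall_isUnit_one_add {I : Ideal R} (h : ∀ j ∈ I, IsUnit (1 + j)) :
    I ≤ Ring.jacobson R := by
  intro j hj
  rw [← Ideal.jacobson_bot, Ideal.mem_jacobson_iff]
  intro y
  obtain ⟨u, hu⟩ := h (y * j) (I.mul_mem_left y hj)
  refine ⟨↑u⁻¹, ?_⟩
  rw [Ideal.mem_bot, sub_eq_zero, mul_assoc, ← mul_add_one, add_comm (y * j), ← hu, u.inv_mul]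

theorem isUnit_of_isUnit_quotient_jacobson {a : R}
    (ha : IsUnit (Ideal.Quotient.mk (Ring.jacobson R) a)) : IsUnit a := by
  obtain ⟨b', hab', hb'a⟩ := isUnit_iff_exists.mp ha
  obtain ⟨b, rfl⟩ := Ideal.Quotient.mk_surjective b'
  have unit_of_quotient_eq_one {c : R} (hc : Ideal.Quotient.mk (Ring.jacobson R) c = 1) :
      IsUnit c := by
    rw [← map_one (Ideal.Quotient.mk _), Ideal.Quotient.eq] at hc
    simpa only [add_sub_cancel] using isUnit_one_add_of_mem_jacobson hc
  rw [← map_mul] at hab' hb'a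
  obtain ⟨u, hu⟩ := unit_of_quotient_eq_one hab'
  obtain ⟨v, hv⟩ := unit_of_quotient_eq_one hb'a
  exact isUnit_iff_exists_and_exists.mpr
    ⟨⟨b * ↑u⁻¹, by rw [← mul_assoc, ← hu, u.mul_inv]⟩,
      ⟨↑v⁻¹ * b, by rw [mul_assoc, ← hv, v.inv_mul]⟩⟩

theorem isSemilocalRing_iff_isSemisimpleRing_quotient_jacobson :
    IsSemilocalRing R ↔ IsSemisimpleRing (R ⧸ Ring.jacobson R) := by
  rw [IsSemilocalRing, Ideal.jacobson_bot]
  exact (LinearMap.isSemisimpleModule_iff_of_bijective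
    { toFun := id, map_add' := fun _ _ ↦ rfl, map_smul' := fun _ _ ↦ rfl :
      R ⧸ Ring.jacobson R →ₛₗ[Ideal.Quotient.mk (Ring.jacobson R)] R ⧸ Ring.jacobson R }
    Function.bijective_id)

theorem isSemilocalRing_iff_isArtinian_quotient_jacobson :
    IsSemilocalRing R ↔ IsArtinian R (R ⧸ Ring.jacobson R) := by
  rw [IsSemilocalRing, Ideal.jacobson_bot]
  refine ⟨fun h ↦ inferInstance, fun h ↦ ?_⟩
  exact (IsArtinian.isSemisimpleModule_iff_jacobson R _).mpr (Module.jacobson_quotient_jacobson R R)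

theorem isSemilocalRing_of_surjective [IsSemisimpleRing S] (f : R →+* S)
    (hf : Function.Surjective f) (hker : RingHom.ker f ≤ Ring.jacobson R) :
    IsSemilocalRing R := by
  have : IsSemisimpleRing (R ⧸ RingHom.ker f) :=
    (RingHom.quotientKerEquivOfSurjective hf).symm.isSemisimpleRing
  exact isSemilocalRing_iff_isSemisimpleRing_quotient_jacobson.mpr <|
    (Ideal.Quotient.factor hker).isSemisimpleRing_of_surjective
      (Ideal.Quotient.factor_surjective hker)

theorem IsSemilocalRing.of_ringEquiv_mulOpposite (h : IsSemilocalRing S) (e : R ≃+* Sᵐᵒᵖ) :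
    IsSemilocalRing R := by
  have := isSemilocalRing_iff_isSemisimpleRing_quotient_jacobson.mp h
  refine isSemilocalRing_of_surjective
    ((Ideal.Quotient.mk (Ring.jacobson S)).op.comp e.toRingHom) ?_ ?_
  · exact (MulOpposite.op_surjective.comp
      (Ideal.Quotient.mk_surjective.comp MulOpposite.unop_surjective)).comp e.surjective
  · refine le_jacobson_of_forall_isUnit_one_add fun j hj ↦ ?_
    have hj : (e j).unop ∈ Ring.jacobson S :=
      Ideal.Quotient.eq_zero_iff_mem.mp (MulOpposite.op_injective hj)
    have := (isUnit_one_add_of_mem_jacobson hj).op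
    rwa [MulOpposite.op_add, MulOpposite.op_unop, MulOpposite.op_one, ← map_one e, ← map_add,
      MulEquiv.isUnit_map] at this

end JacobsonRadical

section DistributiveModules

variable {R R' M M' V T ι : Type*} [Ring R] [Ring R'] [AddCommGroup M] [Module R M]
  [AddCommGroup M'] [Module R' M'] [AddCommGroup V] [Module R V] [AddCommGroup T] [Module R T]

theorem isDistribModule_submodule_iff {N : Submodule R M} :
    IsDistribModule R N ↔ ∀ X ≤ N, ∀ Y ≤ N, ∀ Z ≤ N, X ⊓ (Y ⊔ Z) ≤ X ⊓ Y ⊔ X ⊓ Z := by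
  let e := N.mapIic
  constructor
  · intro h X hX Y hY Z hZ
    have := congrArg e (h (e.symm ⟨X, hX⟩) (e.symm ⟨Y, hY⟩) (e.symm ⟨Z, hZ⟩))
    simp only [map_inf, map_sup, OrderIso.apply_symm_apply] at this
    exact (congrArg Subtype.val this).le
  · intro h X Y Z
    refine le_antisymm ?_ le_inf_sup
    rw [← e.le_iff_le]
    simp only [map_inf, map_sup]
    exact h _ (e X).2 _ (e Y).2 _ (e Z).2

theorem IsDistribModule.of_latticeHom {N : Submodule R M} {N' : Submodule R' M'}
    (hN : IsDistribModule R N) (f : LatticeHom (Submodule R' M') (Submodule R M))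
    (hf : Function.Injective f) (hNN' : f N' ≤ N) : IsDistribModule R' N' := by
  have le_iff {X Y : Submodule R' M'} : f X ≤ f Y ↔ X ≤ Y := by
    rw [← inf_eq_left, ← map_inf, hf.eq_iff, inf_eq_left]
  rw [isDistribModule_submodule_iff] at hN ⊢
  intro X hX Y hY Z hZ
  rw [← le_iff]
  simp only [map_inf, map_sup]
  exact hN _ ((le_iff.mpr hX).trans hNN') _ ((le_iff.mpr hY).trans hNN') _
    ((le_iff.mpr hZ).trans hNN')

theorem IsDistribModule.submodule (h : IsDistribModule R M) (N : Submodule R M) :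
    IsDistribModule R N :=
  isDistribModule_submodule_iff.mpr fun X _ Y _ Z _ ↦ (h X Y Z).le

theorem IsDistribModule.of_surjective (h : IsDistribModule R M) {f : M →ₗ[R] V}
    (hf : Function.Surjective f) : IsDistribModule R V := by
  have comap_sup (Y Z : Submodule R V) : (Y ⊔ Z).comap f = Y.comap f ⊔ Z.comap f := by
    refine le_antisymm (fun x hx ↦ ?_)
      (sup_le (Submodule.comap_mono le_sup_left) (Submodule.comap_mono le_sup_right))
    obtain ⟨y, hy, z, hz, hyz⟩ := Submodule.mem_sup.mp hx
    obtain ⟨y', rfl⟩ := hf y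
    refine Submodule.mem_sup.mpr ⟨y', hy, x - y', ?_, add_sub_cancel y' x⟩
    rwa [Submodule.mem_comap, map_sub, ← hyz, add_sub_cancel_left]
  intro X Y Z
  apply Submodule.comap_injective_of_surjective hf
  rw [Submodule.comap_inf, comap_sup, comap_sup, Submodule.comap_inf, Submodule.comap_inf, h]

/-- `V` is a subquotient of `M`: a homomorphic image of a submodule of `M`. -/
def IsSubquotient (R M V : Type*) [Ring R] [AddCommGroup M] [Module R M] [AddCommGroup V]
    [Module R V] : Prop :=
  ∃ (W : Submodule R M) (f : W →ₗ[R] V), Function.Surjective f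

theorem IsSubquotient.of_ker_le {P : Type*} [AddCommGroup P] [Module R P] (g : P →ₗ[R] M)
    (f : P →ₗ[R] V) (hf : Function.Surjective f) (hgf : LinearMap.ker g ≤ LinearMap.ker f) :
    IsSubquotient R M V := by
  refine ⟨LinearMap.range g, (LinearMap.ker g).liftQ f hgf ∘ₗ g.quotKerEquivRange.symm, ?_⟩
  rw [LinearMap.coe_comp]
  refine Function.Surjective.comp ?_ g.quotKerEquivRange.symm.surjective
  rw [← LinearMap.range_eq_top, Submodule.range_liftQ, LinearMap.range_eq_top.mpr hf]

theorem IsSubquotient.of_linearEquiv {P : Type*} [AddCommGroup P] [Module R P]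
    (h : IsSubquotient R M V) (e : M ≃ₗ[R] P) : IsSubquotient R P V :=
  let ⟨W, f, hf⟩ := h
  ⟨W.map e.toLinearMap, f ∘ₗ (e.submoduleMap W).symm, hf.comp (e.submoduleMap W).symm.surjective⟩

theorem IsDistribModule.of_isSubquotient (h : IsDistribModule R M) (hV : IsSubquotient R M V) :
    IsDistribModule R V :=
  let ⟨W, _, hf⟩ := hV
  (h.submodule W).of_surjective hf

theorem IsSubquotient.exists_of_sup {N P : Submodule R M}
    (h : IsSubquotient R (N ⊔ P : Submodule R M) V) :
    ∃ V₁ : Submodule R V, IsSubquotient R N (V ⧸ V₁) ∧ IsSubquotient R P V₁ := by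
  obtain ⟨W, f, hf⟩ := h
  let inclP := Submodule.inclusion (le_sup_right : P ≤ N ⊔ P)
  let add : N × P →ₗ[R] (N ⊔ P : Submodule R M) :=
    (Submodule.inclusion (le_sup_left : N ≤ N ⊔ P)).coprod inclP
  have add_surjective : Function.Surjective add := by
    rintro ⟨x, hx⟩
    obtain ⟨n, hn, p, hp, rfl⟩ := Submodule.mem_sup.mp hx
    exact ⟨(⟨n, hn⟩, ⟨p, hp⟩), rfl⟩
  let fP := f ∘ₗ inclP.submoduleComap W
  refine ⟨LinearMap.range fP, ?_, W.comap inclP, fP.rangeRestrict, fP.surjective_rangeRestrict⟩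
  refine .of_ker_le (LinearMap.fst R N P ∘ₗ (W.comap add).subtype)
    ((LinearMap.range fP).mkQ ∘ₗ f ∘ₗ add.submoduleComap W) ?_ ?_
  · exact (Submodule.mkQ_surjective _).comp
      (hf.comp (add.submoduleComap_surjective_of_surjective W add_surjective))
  · rintro ⟨⟨n, p⟩, hnp⟩ (rfl : n = 0)
    have add_eq : add (0, p) = inclP p := by simp [add]
    refine (Submodule.Quotient.mk_eq_zero _).mpr
      ⟨⟨p, by simpa only [Submodule.mem_comap, ← add_eq]⟩, ?_⟩
    exact congrArg f (Subtype.ext add_eq.symm)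

theorem IsDistribModule.eq_bot_of_linearEquiv (h : IsDistribModule R M) {X Y : Submodule R M}
    (hXY : Disjoint X Y) (e : X ≃ₗ[R] Y) : X = ⊥ := by
  let D := LinearMap.range (X.subtype + Y.subtype ∘ₗ e)
  have inf_left : D ⊓ X = ⊥ := by
    rw [eq_bot_iff]
    rintro _ ⟨⟨x, rfl⟩, hx⟩
    have hex : (e x : M) ∈ X := by simpa using sub_mem hx x.2
    have : e x = 0 := Subtype.ext (Submodule.disjoint_def.mp hXY _ hex (e x).2)
    simp [e.map_eq_zero_iff.mp this]
  have inf_right : D ⊓ Y = ⊥ := by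
    rw [eq_bot_iff]
    rintro _ ⟨⟨x, rfl⟩, hx⟩
    have hxY : (x : M) ∈ Y := by simpa using sub_mem hx (e x).2
    have : x = 0 := Subtype.ext (Submodule.disjoint_def.mp hXY _ x.2 hxY)
    simp [this]
  have D_le : D ≤ X ⊔ Y := by
    rintro _ ⟨x, rfl⟩
    exact Submodule.add_mem_sup x.2 (e x).2
  have D_eq_bot : D = ⊥ := by
    rw [← inf_eq_left.mpr D_le, h, inf_left, inf_right, sup_bot_eq]
  rw [eq_bot_iff]
  intro x hx
  have : x + e ⟨x, hx⟩ = 0 := (Submodule.mem_bot R).mp (D_eq_bot ▸ ⟨⟨x, hx⟩, rfl⟩)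
  have hxY : x ∈ Y := eq_neg_of_add_eq_zero_left this ▸ neg_mem (e ⟨x, hx⟩).2
  exact Submodule.disjoint_def.mp hXY x hx hxY

theorem IsDistribModule.length_le_one_of_isIsotypic [IsSemisimpleModule R V]
    (h : IsDistribModule R V) (hV : IsIsotypic R V) : Module.length R V ≤ 1 := by
  cases subsingleton_or_nontrivial V
  · exact Module.length_eq_zero.trans_le zero_le_one
  obtain ⟨S, hS⟩ := IsSemisimpleModule.exists_simple_submodule R V
  suffices S_eq_top : S = ⊤ by
    rw [← Module.length_top (R := R), ← S_eq_top, Module.length_eq_one]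
  obtain ⟨C, hC⟩ := exists_isCompl S
  suffices C_eq_bot : C = ⊥ by simpa only [C_eq_bot, sup_bot_eq] using hC.sup_eq_top
  refine (IsSemisimpleModule.eq_bot_or_exists_simple_le C).resolve_right ?_
  rintro ⟨S', hS'C, hS'⟩
  obtain ⟨e⟩ := hV S' S
  have : Nontrivial S := hS.nontrivial
  exact S.nontrivial_iff_ne_bot.mp this (h.eq_bot_of_linearEquiv (hC.disjoint.mono_right hS'C) e)

theorem length_le_card_of_isSubquotient_sup [IsSemisimpleModule R V]
    (hV : IsIsotypicOfType R V T) {N : ι → Submodule R M} {s : Finset ι}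
    (hN : ∀ i ∈ s, IsDistribModule R (N i))
    (h : IsSubquotient R (s.sup N : Submodule R M) V) : Module.length R V ≤ s.card := by
  classical
  induction s using Finset.induction_on generalizing V with
  | empty =>
    rw [Finset.sup_empty] at h
    obtain ⟨W, f, hf⟩ := h
    have : Subsingleton V := hf.subsingleton
    exact Module.length_eq_zero.trans_le zero_le
  | insert i s hi ih =>
    rw [Finset.sup_insert] at h
    obtain ⟨V₁, hquot, hsub⟩ := h.exists_of_sup
    obtain ⟨C, ⟨e⟩⟩ := IsSemisimpleModule.exists_submodule_linearEquiv_quotient V₁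
    have isotypic_quot : IsIsotypicOfType R (V ⧸ V₁) T :=
      hV.of_injective (C.subtype ∘ₗ e.symm) (C.injective_subtype.comp e.symm.injective)
    calc Module.length R V = Module.length R V₁ + Module.length R (V ⧸ V₁) :=
          Module.length_eq_add_of_exact V₁.subtype V₁.mkQ V₁.injective_subtype V₁.mkQ_surjective
            (LinearMap.exact_subtype_mkQ V₁)
      _ ≤ s.card + 1 := add_le_add
          (ih (hV.of_injective _ V₁.injective_subtype)
            (fun j hj ↦ hN j (s.mem_insert_of_mem hj)) hsub)
          (((hN i (s.mem_insert_self i)).of_isSubquotient hquot).length_le_one_of_isIsotypic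
            isotypic_quot.isIsotypic)
      _ = ((insert i s).card : ℕ∞) := by rw [Finset.card_insert_of_notMem hi, Nat.cast_add_one]

end DistributiveModules

section NilIdeals

variable {R : Type*} [Ring R] [IsNoetherianRing R]

variable (R) in
theorem exists_isNilpotent_ideal_forall_mul_self_le :
    ∃ W : Ideal R, W.IsTwoSided ∧ IsNilpotent W ∧
      ∀ V : Ideal R, V.IsTwoSided → V * V ≤ W → V ≤ W := by
  obtain ⟨W, ⟨hW, n, hn⟩, W_max⟩ := wellFounded_gt.has_min
    {W : Ideal R | W.IsTwoSided ∧ IsNilpotent W} ⟨⊥, inferInstance, 1, Submodule.pow_one _⟩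
  refine ⟨W, hW, ⟨n, hn⟩, fun V hV hVW ↦ sup_eq_left.mp ?_⟩
  refine (le_sup_left.eq_of_not_lt (W_max (W ⊔ V) ⟨⟨fun {_} b h ↦ ?_⟩, 2 * n, ?_⟩)).symm
  · obtain ⟨w, hw, v, hv, rfl⟩ := Submodule.mem_sup.mp h
    exact add_mul w v b ▸ Submodule.add_mem_sup (W.mul_mem_right b hw) (V.mul_mem_right b hv)
  · have mul_self_le : (W ⊔ V) * (W ⊔ V) ≤ W := by
      rw [Ideal.sup_mul, Ideal.mul_sup V]
      exact sup_le Ideal.mul_le_left (sup_le Ideal.mul_le_right hVW)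
    have pow_le (k : ℕ) : (W ⊔ V) ^ (2 * k) ≤ W ^ k := by
      induction k with
      | zero => rw [mul_zero, Submodule.pow_zero, Submodule.pow_zero]
      | succ k ih =>
        rw [Nat.mul_succ, Submodule.pow_succ, Submodule.pow_succ, Submodule.pow_succ,
          Ideal.mul_assoc]
        exact Ideal.mul_mono ih mul_self_le
    exact le_bot_iff.mp ((pow_le n).trans hn.le)

variable (R) in
theorem exists_isNilpotent_ideal_forall_mul_mul_mem :
    ∃ W : Ideal R, W.IsTwoSided ∧ IsNilpotent W ∧ ∀ b, (∀ u, b * u * b ∈ W) → b ∈ W := by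
  obtain ⟨W, hW, hn, hV⟩ := exists_isNilpotent_ideal_forall_mul_self_le R
  refine ⟨W, hW, hn, fun b hb ↦ ?_⟩
  have span_mul_span_le : Ideal.span {b} * Ideal.span {b} ≤ W := by
    refine Ideal.mul_le.mpr fun r hr s hs ↦ ?_
    obtain ⟨x, rfl⟩ := Ideal.mem_span_singleton'.mp hr
    obtain ⟨y, rfl⟩ := Ideal.mem_span_singleton'.mp hs
    simpa only [mul_assoc] using W.mul_mem_left x (hb y)
  refine hV (Ideal.span {b} * ⊤) inferInstance ?_ ?_
  · calc Ideal.span {b} * ⊤ * (Ideal.span {b} * ⊤)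
        = Ideal.span {b} * (⊤ * Ideal.span {b}) * ⊤ := by simp only [Ideal.mul_assoc]
      _ ≤ Ideal.span {b} * Ideal.span {b} * ⊤ :=
          Ideal.mul_mono_left (Ideal.mul_mono_right Ideal.mul_le_right)
      _ ≤ W * ⊤ := Ideal.mul_mono_left span_mul_span_le
      _ ≤ W := Ideal.mul_le_left
  · simpa only [mul_one] using
      Ideal.mul_mem_mul (Ideal.mem_span_singleton_self b) (Submodule.mem_top (x := (1 : R)))

/- Utumi's argument: if `b ∈ I` has a maximal annihilator modulo `W` among the elements of `I`
outside `W`, then `b * u * b ∈ W` for all `u`. -/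
theorem le_of_forall_isNilpotent_of_forall_mul_mul_mem {I W : Ideal R} [I.IsTwoSided] [W.IsTwoSided]
    (hI : ∀ a ∈ I, IsNilpotent a) (hW : ∀ b, (∀ u, b * u * b ∈ W) → b ∈ W) : I ≤ W := by
  by_contra hIW
  obtain ⟨b₀, hb₀⟩ := SetLike.not_le_iff_exists.mp hIW
  obtain ⟨_, ⟨b, ⟨hbI, hbW⟩, rfl⟩, b_max⟩ := wellFounded_gt.has_min
    ((fun b ↦ W.colon {b}) '' {b | b ∈ I ∧ b ∉ W}) ⟨_, b₀, hb₀, rfl⟩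
  refine hbW (hW b fun u ↦ ?_)
  have exists_pow_mem : ∃ k, (b * u) ^ (k + 1) ∈ W := by
    obtain ⟨k, hk⟩ := hI _ (I.mul_mem_right u hbI)
    exact ⟨k, by rw [pow_succ, hk, zero_mul]; exact W.zero_mem⟩
  classical
  obtain ⟨k, hk, k_min⟩ := Nat.findX exists_pow_mem
  rcases k with _ | k
  · exact W.mul_mem_right b (by simpa using hk)
  have pow_mem : (b * u) ^ (k + 1) ∈ I := by
    rw [pow_succ]
    exact I.mul_mem_left _ (I.mul_mem_right u hbI)
  have colon_le : W.colon {b} ≤ W.colon {(b * u) ^ (k + 1)} := by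
    intro c hc
    rw [Submodule.mem_colon_singleton, smul_eq_mul] at hc ⊢
    rw [pow_succ', mul_assoc b, ← mul_assoc]
    exact W.mul_mem_right _ hc
  have colon_eq := colon_le.eq_of_not_lt
    (b_max _ ⟨_, ⟨pow_mem, k_min k k.lt_succ_self⟩, rfl⟩)
  have : b * u ∈ W.colon {b} := by
    rw [colon_eq, Submodule.mem_colon_singleton, smul_eq_mul, ← pow_succ']
    exact hk
  exact Submodule.mem_colon_singleton.mp this

/-- Levitzki's theorem. -/
theorem isNilpotent_ideal_of_forall_isNilpotent {I : Ideal R} [I.IsTwoSided]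
    (hI : ∀ a ∈ I, IsNilpotent a) : IsNilpotent I := by
  obtain ⟨W, _, ⟨n, hn⟩, hW⟩ := exists_isNilpotent_ideal_forall_mul_mul_mem R
  have I_le : I ≤ W := le_of_forall_isNilpotent_of_forall_mul_mul_mem hI hW
  exact ⟨n, le_bot_iff.mp ((Ideal.pow_right_mono I_le n).trans hn.le)⟩

end NilIdeals

section LocalIdempotents

variable {R : Type*} [Ring R]

/-- An idempotent `e` is local if its corner ring `eRe` is local. This is encoded by the equivalent
condition that `Re/J(R)e` is simple: the left ideal `{r | r * e ∈ J(R)}`, the annihilator of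
the class of `e`, is maximal. -/
structure IsLocalIdempotent (e : R) : Prop where
  isIdempotentElem : IsIdempotentElem e
  isMaximal_colon : ((Ring.jacobson R).colon {e}).IsMaximal

namespace IsLocalIdempotent

variable {e u : R}

theorem notMem_jacobson (he : IsLocalIdempotent e) : e ∉ Ring.jacobson R := fun h ↦
  he.isMaximal_colon.ne_top <| (Ideal.eq_top_iff_one _).mpr <|
    Submodule.mem_colon_singleton.mpr (by rwa [one_smul])

theorem exists_mul_eq_left (he : IsLocalIdempotent e) (heu : e * u = u) (hue : u * e = u)
    (hu : u ∉ Ring.jacobson R) : ∃ c, e * c = c ∧ c * e = c ∧ c * u = e := by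
  have u_notMem : u ∉ (Ring.jacobson R).colon {e} := by
    rwa [Submodule.mem_colon_singleton, smul_eq_mul, hue]
  obtain ⟨r, j, hj, hrj⟩ := he.isMaximal_colon.exists_inv u_notMem
  rw [Submodule.mem_colon_singleton, smul_eq_mul] at hj
  have eru : e * r * u = (1 - e * j * e) * e := by
    have := congrArg (e * · * e) hrj
    simp only [mul_add, add_mul, mul_assoc, hue, one_mul, he.isIdempotentElem.eq] at this
    simp only [sub_mul, one_mul, mul_assoc, he.isIdempotentElem.eq]
    exact eq_sub_of_add_eq this
  have mem : -(e * j * e) ∈ Ring.jacobson R :=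
    neg_mem (mul_assoc e j e ▸ Ideal.mul_mem_left _ e hj)
  obtain ⟨v, hv⟩ := isUnit_one_add_of_mem_jacobson mem
  rw [← sub_eq_add_neg] at hv
  refine ⟨e * (↑v⁻¹ * (e * r) * e), ?_, ?_, ?_⟩
  · rw [← mul_assoc, he.isIdempotentElem.eq]
  · simp only [mul_assoc, he.isIdempotentElem.eq]
  · rw [mul_assoc, mul_assoc, heu, mul_assoc, eru, ← hv, v.inv_mul_cancel_left,
      he.isIdempotentElem.eq]

theorem exists_mul_eq_right (he : IsLocalIdempotent e) (heu : e * u = u) (hue : u * e = u)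
    (hu : u ∉ Ring.jacobson R) : ∃ c, u * c = e := by
  obtain ⟨c, hec, hce, hcu⟩ := he.exists_mul_eq_left heu hue hu
  have hc : c ∉ Ring.jacobson R := fun h ↦
    he.notMem_jacobson (hcu ▸ Ideal.mul_mem_right u _ h)
  obtain ⟨d, -, hde, hdc⟩ := he.exists_mul_eq_left hec hce hc
  refine ⟨c, ?_⟩
  have : d = u := by rw [← hde, ← hcu, ← mul_assoc, hdc, heu]
  rw [← this, hdc]

theorem isDistribModule_span (he : IsLocalIdempotent e) {ι : Type*} {N : ι → Ideal R}
    (hN : ∀ i, IsDistribModule R (N i)) (N_sup : iSup N = ⊤) :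
    IsDistribModule R (Ideal.span {e}) := by
  obtain ⟨x, hx, hx_sum⟩ := (Submodule.mem_iSup_iff_exists_finsupp N 1).mp (N_sup ▸ trivial)
  obtain ⟨i, hi⟩ : ∃ i, e * x i * e ∉ Ring.jacobson R := by
    by_contra! h
    refine he.notMem_jacobson ?_
    have x_sum : ∑ i ∈ x.support, x i = 1 := hx_sum
    have exe_sum : ∑ i ∈ x.support, e * x i * e = e := by
      rw [← Finset.sum_mul, ← Finset.mul_sum, x_sum, mul_one, he.isIdempotentElem.eq]
    exact exe_sum ▸ Ideal.sum_mem _ fun i _ ↦ h i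
  obtain ⟨c, hc⟩ := he.exists_mul_eq_right (by simp only [← mul_assoc, he.isIdempotentElem.eq])
    (by simp only [mul_assoc, he.isIdempotentElem.eq]) hi
  let f : Ideal.span {e} →ₗ[R] N i :=
    LinearMap.toSpanSingleton R (N i) ⟨x i, hx i⟩ ∘ₗ Submodule.subtype _
  refine (hN i).of_isSubquotient
    (.of_ker_le f LinearMap.id Function.surjective_id fun ⟨r, hr⟩ hfr ↦ Subtype.ext ?_)
  have hre : r * e = r := by
    obtain ⟨a, rfl⟩ := Ideal.mem_span_singleton'.mp hr
    rw [mul_assoc, he.isIdempotentElem.eq]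
  have hrx : r * x i = 0 := congrArg Subtype.val hfr
  calc r = r * (e * x i * e * c) := by rw [hc, hre]
    _ = r * x i * (e * c) := by simp only [← mul_assoc, hre]
    _ = 0 := by rw [hrx, zero_mul]

theorem of_quotient (he : IsIdempotentElem e)
    (h : IsLocalIdempotent (Ideal.Quotient.mk (Ring.jacobson R) e)) : IsLocalIdempotent e := by
  have colon_eq : (Ring.jacobson R).colon {e} = ((Ring.jacobson (R ⧸ Ring.jacobson R)).colon
      {Ideal.Quotient.mk (Ring.jacobson R) e}).comap (Ideal.Quotient.mk (Ring.jacobson R)) := by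
    ext r
    rw [Ideal.mem_comap, Submodule.mem_colon_singleton, Submodule.mem_colon_singleton,
      Ring.jacobson_quotient_jacobson, smul_eq_mul, smul_eq_mul, ← map_mul, Submodule.mem_bot,
      Ideal.Quotient.eq_zero_iff_mem]
  have := h.isMaximal_colon
  exact ⟨he, colon_eq ▸ Ideal.comap_isMaximal_of_surjective _ Ideal.Quotient.mk_surjective⟩

end IsLocalIdempotent

theorem exists_completeOrthogonalIdempotents_isLocalIdempotent (R : Type*) [Ring R]
    [IsSemisimpleRing R] :
    ∃ (n : ℕ) (e : Fin n → R), CompleteOrthogonalIdempotents e ∧ ∀ i, IsLocalIdempotent (e i) := by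
  classical
  obtain ⟨s, s_indep, s_sup, s_simple⟩ :=
    IsSemisimpleModule.exists_sSupIndep_sSup_simples_eq_top R R
  have := (WellFoundedGT.finite_of_sSupIndep s_indep).to_subtype
  let V : s → Ideal R := (↑)
  have V_internal : DirectSum.IsInternal V :=
    (DirectSum.isInternal_submodule_iff_iSupIndep_and_iSup_eq_top V).mpr
      ⟨(sSupIndep_iff s).mp s_indep, sSup_eq_iSup' s ▸ s_sup⟩
  let _ := V_internal.chooseDecomposition
  have := Fintype.ofFinite s
  have complete := DirectSum.completeOrthogonalIdempotents_idempotent V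
  have local_idempotent (i : s) : IsLocalIdempotent (DirectSum.idempotent V i) := by
    refine ⟨complete.idem i, ?_⟩
    have : IsSimpleModule R (V i) := s_simple i i.2
    let f : V i := DirectSum.decompose V 1 i
    have f_ne_zero : f ≠ 0 := by
      have : Nontrivial (V i) := IsSimpleModule.nontrivial R _
      obtain ⟨x, hx⟩ := exists_ne (0 : V i)
      refine fun hf ↦ hx (Subtype.ext ?_)
      have idempotent_eq_zero : DirectSum.idempotent V i = 0 := congrArg Subtype.val hf
      rw [← DirectSum.decompose_of_mem_same V x.2, DirectSum.decompose_eq_mul_idempotent,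
        idempotent_eq_zero, mul_zero]
      rfl
    convert IsSimpleModule.ker_toSpanSingleton_isMaximal R f_ne_zero using 1
    ext r
    rw [IsSemisimpleRing.jacobson_eq_bot, Submodule.mem_colon_singleton]
    exact (Subtype.ext_iff (a1 := r • f) (a2 := 0)).symm
  let φ := (Finite.equivFin s).symm
  exact ⟨_, _, (CompleteOrthogonalIdempotents.equiv φ).mpr complete, fun i ↦ local_idempotent _⟩

theorem IsSemilocalRing.exists_completeOrthogonalIdempotents (h : IsSemilocalRing R)
    (hnil : ∀ a ∈ Ring.jacobson R, IsNilpotent a) :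
    ∃ (n : ℕ) (e : Fin n → R), CompleteOrthogonalIdempotents e ∧ ∀ i, IsLocalIdempotent (e i) := by
  have := isSemilocalRing_iff_isSemisimpleRing_quotient_jacobson.mp h
  obtain ⟨n, f, f_complete, f_local⟩ :=
    exists_completeOrthogonalIdempotents_isLocalIdempotent (R ⧸ Ring.jacobson R)
  obtain ⟨e, e_complete, rfl⟩ := f_complete.lift_of_isNilpotent_ker
    (Ideal.Quotient.mk (Ring.jacobson R)) (by rwa [Ideal.mk_ker])
    fun i ↦ Ideal.Quotient.mk_surjective (f i)
  exact ⟨n, e, e_complete, fun i ↦ .of_quotient (e_complete.idem i) (f_local i)⟩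

theorem iSup_span_eq_top_of_completeOrthogonalIdempotents {ι : Type*} [Fintype ι] {e : ι → R}
    (he : CompleteOrthogonalIdempotents e) : ⨆ i, Ideal.span {e i} = ⊤ := by
  rw [Ideal.eq_top_iff_one, ← he.complete]
  exact Submodule.sum_mem _ fun i _ ↦
    Submodule.mem_iSup_of_mem i (Ideal.mem_span_singleton_self (e i))

theorem iSupIndep_span_of_orthogonalIdempotents {ι : Type*} {e : ι → R}
    (he : OrthogonalIdempotents e) : iSupIndep fun i ↦ Ideal.span {e i} := by
  intro i
  rw [Submodule.disjoint_def]
  intro r hr hr'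
  obtain ⟨a, rfl⟩ := Ideal.mem_span_singleton'.mp hr
  have iSup_le_ker : ⨆ j, ⨆ (_ : j ≠ i), Ideal.span {e j} ≤
      LinearMap.ker (LinearMap.toSpanSingleton R R (e i)) :=
    iSup₂_le fun j hji ↦ (Ideal.span_singleton_le_iff_mem _).mpr (he.ortho hji)
  have : a * e i * e i = 0 := iSup_le_ker hr'
  rwa [mul_assoc, (he.idem i).eq] at this

end LocalIdempotents

section CentralElements

open Polynomial

/- The left ideals generated by the products `∏ i < n, (c i - a)` descend, and `c n - a` is
invertible as soon as the `n`-th inclusion is an equality. -/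
theorem exists_mul_algebraMap_sub_eq_one {K S : Type*} [CommRing K] [Ring S] [Algebra K S]
    [IsArtinianRing S] {c : ℕ → K} (hc : ∀ i j, i < j → IsUnit (algebraMap K S (c i - c j)))
    (a : S) : ∃ n b, b * (algebraMap K S (c n) - a) = 1 := by
  let q (n : ℕ) : K[X] := ∏ i ∈ Finset.range n, (C (c i) - X)
  have q_succ (n : ℕ) : q (n + 1) = q n * (C (c n) - X) := Finset.prod_range_succ _ n
  have span_le (n : ℕ) : Ideal.span {aeval a (q (n + 1))} ≤ Ideal.span {aeval a (q n)} := by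
    rw [Ideal.span_singleton_le_iff_mem, q_succ, mul_comm, map_mul]
    exact Ideal.mul_mem_left _ _ (Ideal.mem_span_singleton_self _)
  obtain ⟨n, hn⟩ := IsArtinian.monotone_stabilizes (R := S)
    ⟨fun n ↦ OrderDual.toDual (Ideal.span {aeval a (q n)}), monotone_nat_of_le_succ span_le⟩
  obtain ⟨r, hr⟩ : ∃ r, r * aeval a (q (n + 1)) = aeval a (q n) := by
    rw [← Ideal.mem_span_singleton']
    exact (OrderDual.toDual_inj.mp (hn (n + 1) n.le_succ)) ▸ Ideal.mem_span_singleton_self _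
  have eval_isUnit : IsUnit (algebraMap K S ((q n).eval (c n))) := by
    rw [eval_prod]
    refine Finset.prod_induction _ (fun z ↦ IsUnit (algebraMap K S z))
      (fun y z hy hz ↦ map_mul (algebraMap K S) y z ▸ hy.mul hz)
      (map_one (algebraMap K S) ▸ isUnit_one) fun i hi ↦ ?_
    simpa only [eval_sub, eval_C, eval_X] using hc i n (Finset.mem_range.mp hi)
  obtain ⟨v, hv⟩ := eval_isUnit
  obtain ⟨d, hd⟩ := X_sub_C_dvd_sub_C_eval (a := c n) (p := q n)
  have eval_eq : C ((q n).eval (c n)) = q n + d * (C (c n) - X) := by linear_combination -hd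
  have v_eq : (v : S) = (r * aeval a (q n) + aeval a d) * (algebraMap K S (c n) - a) := calc
    (v : S) = r * aeval a (q (n + 1)) + aeval a (d * (C (c n) - X)) := by
      rw [hv, ← aeval_C a, eval_eq, map_add, hr]
    _ = _ := by rw [q_succ, map_mul, map_mul, map_sub, aeval_C, aeval_X, add_mul, mul_assoc]
  exact ⟨n, ↑v⁻¹ * (r * aeval a (q n) + aeval a d), by rw [mul_assoc, ← v_eq, v.inv_mul]⟩

end CentralElements

section HahnIdeals

open HahnSeries

variable {Γ R : Type*} [PartialOrder Γ] [AddCommMonoid Γ] [IsOrderedCancelAddMonoid Γ] [Ring R]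

theorem hahnSeries_coeff_mul_mem {S : Type*} [SetLike S R] [AddSubmonoidClass S R] {s : S}
    {f g : HahnSeries Γ R} {n : Γ} (h : ∀ i j, i + j = n → f.coeff i * g.coeff j ∈ s) :
    (f * g).coeff n ∈ s := by
  rw [coeff_mul]
  exact sum_mem fun ij hij ↦ h _ _ (Finset.mem_antidiagonal.mp hij).2.2

variable (Γ) in
/-- The left ideal `I((Γ))` of the Hahn series all of whose coefficients lie in `I`. -/
def hahnIdeal (I : Ideal R) : Ideal (HahnSeries Γ R) where
  carrier := {f | ∀ n, f.coeff n ∈ I}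
  zero_mem' _ := I.zero_mem
  add_mem' hf hg n := I.add_mem (hf n) (hg n)
  smul_mem' _ _ hf _ := hahnSeries_coeff_mul_mem fun _ j _ ↦ I.mul_mem_left _ (hf j)

variable {I J : Ideal R} {f g : HahnSeries Γ R} {a : R}

theorem mem_hahnIdeal : f ∈ hahnIdeal Γ I ↔ ∀ n, f.coeff n ∈ I := Iff.rfl

theorem C_mem_hahnIdeal : C a ∈ hahnIdeal Γ I ↔ a ∈ I := by
  refine ⟨fun h ↦ coeff_single_same (0 : Γ) a ▸ h 0, fun h n ↦ ?_⟩
  obtain rfl | hn := eq_or_ne n 0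
  · rwa [C_apply, coeff_single_same]
  · rw [C_apply, coeff_single_of_ne hn]
    exact I.zero_mem

theorem hahnIdeal_mono : Monotone (hahnIdeal (R := R) Γ) := fun _ _ hIJ _ hf n ↦ hIJ (hf n)

theorem hahnIdeal_injective : Function.Injective (hahnIdeal (R := R) Γ) := fun I J hIJ ↦ by
  ext a
  rw [← C_mem_hahnIdeal (Γ := Γ), hIJ, C_mem_hahnIdeal]

theorem hahnIdeal_inf : hahnIdeal Γ (I ⊓ J) = hahnIdeal Γ I ⊓ hahnIdeal Γ J :=
  Ideal.ext fun _ ↦ forall_and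

theorem hahnIdeal_sup : hahnIdeal Γ (I ⊔ J) = hahnIdeal Γ I ⊔ hahnIdeal Γ J := by
  refine le_antisymm (fun f hf ↦ ?_) (hahnIdeal_mono.le_map_sup I J)
  have exists_part (n : Γ) : ∃ a ∈ I, f.coeff n - a ∈ J ∧ (f.coeff n = 0 → a = 0) := by
    by_cases hn : f.coeff n = 0
    · exact ⟨0, I.zero_mem, by rw [hn, sub_zero]; exact J.zero_mem, fun _ ↦ rfl⟩
    · obtain ⟨a, ha, b, hb, hab⟩ := Submodule.mem_sup.mp (hf n)
      exact ⟨a, ha, by rwa [← hab, add_sub_cancel_left], fun h ↦ absurd h hn⟩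
  choose a ha_mem ha_sub ha_zero using exists_part
  let g : HahnSeries Γ R := ⟨a, f.isPWO_support.mono fun n hn h ↦ hn (ha_zero n h)⟩
  exact Submodule.mem_sup.mpr ⟨g, ha_mem, f - g, ha_sub, add_sub_cancel g f⟩

variable (Γ R) in
/-- `hahnIdeal` as a homomorphism of lattices of left ideals. -/
def hahnIdealLatticeHom : LatticeHom (Ideal R) (Ideal (HahnSeries Γ R)) where
  toFun := hahnIdeal Γ
  map_inf' _ _ := hahnIdeal_inf
  map_sup' _ _ := hahnIdeal_sup

theorem mul_mem_hahnIdeal_mul (hf : f ∈ hahnIdeal Γ I) (hg : g ∈ hahnIdeal Γ J) :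
    f * g ∈ hahnIdeal Γ (I * J) := fun _ ↦
  hahnSeries_coeff_mul_mem fun i j _ ↦ Ideal.mul_mem_mul (hf i) (hg j)

theorem pow_mem_hahnIdeal_pow (hf : f ∈ hahnIdeal Γ I) (n : ℕ) : f ^ n ∈ hahnIdeal Γ (I ^ n) := by
  induction n with
  | zero =>
    rw [Submodule.pow_zero, Ideal.one_eq_top]
    exact fun _ ↦ Submodule.mem_top
  | succ n ih =>
    rw [pow_succ, Submodule.pow_succ]
    exact mul_mem_hahnIdeal_mul ih hf

theorem isNilpotent_of_mem_hahnIdeal (hI : IsNilpotent I) (hf : f ∈ hahnIdeal Γ I) :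
    IsNilpotent f := by
  obtain ⟨n, hn⟩ := hI
  have f_pow_mem := pow_mem_hahnIdeal_pow hf n
  rw [hn] at f_pow_mem
  exact ⟨n, HahnSeries.ext (funext f_pow_mem)⟩

theorem colon_hahnIdeal_C : (hahnIdeal Γ I).colon {C a} = hahnIdeal Γ (I.colon {a}) := by
  ext f
  simp only [Submodule.mem_colon_singleton, mem_hahnIdeal, smul_eq_mul, C_apply,
    coeff_mul_single_zero]

end HahnIdeals

section LaurentSeries

open HahnSeries

variable {R : Type*} [Ring R]

theorem exists_isUnit_mul_sub_mem_hahnIdeal {P : Ideal R} (hP : P.IsMaximal)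
    {f : LaurentSeries R} (hf : f ∉ hahnIdeal ℤ P) :
    ∃ g u : LaurentSeries R, IsUnit u ∧ g * f - u ∈ hahnIdeal ℤ P := by
  obtain ⟨m, hm, hm_min⟩ : ∃ m, f.coeff m ∉ P ∧ ∀ n < m, f.coeff n ∈ P := by
    have coeff_map (n : ℤ) : (f.map P.mkQ).coeff n = 0 ↔ f.coeff n ∈ P :=
      Submodule.Quotient.mk_eq_zero P
    have map_ne_zero : f.map P.mkQ ≠ 0 := fun h ↦ hf fun n ↦ (coeff_map n).mp (by rw [h]; rfl)
    exact ⟨_, (coeff_map _).not.mp (coeff_order_eq_zero.not.mpr map_ne_zero),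
      fun n hn ↦ (coeff_map n).mp (coeff_eq_zero_of_lt_order hn)⟩
  obtain ⟨b, j, hj, hbj⟩ := hP.exists_inv hm
  let φ : PowerSeries R := .mk fun n ↦ if n = 0 then 1 else b * f.coeff (n + m)
  have φ_isUnit : IsUnit φ := by
    rw [PowerSeries.isUnit_iff_constantCoeff, ← PowerSeries.coeff_zero_eq_constantCoeff_apply,
      PowerSeries.coeff_mk, if_pos rfl]
    exact isUnit_one
  refine ⟨single (-m) b, φ, φ_isUnit.map (ofPowerSeries ℤ R), fun n ↦ ?_⟩
  rw [coeff_sub, coeff_single_mul, sub_neg_eq_add, PowerSeries.coeff_coe, PowerSeries.coeff_mk]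
  obtain hn | rfl | hn := lt_trichotomy n 0
  · rw [if_pos hn, sub_zero]
    exact P.mul_mem_left _ (hm_min _ (add_lt_of_neg_left m hn))
  · rw [if_neg (lt_irrefl _), if_pos Int.natAbs_zero, zero_add, ← hbj, sub_add_cancel_left]
    exact P.neg_mem hj
  · rw [if_neg hn.not_gt, if_neg (Int.natAbs_ne_zero.mpr hn.ne'), Int.natAbs_of_nonneg hn.le,
      sub_self]
    exact P.zero_mem

theorem isMaximal_hahnIdeal {P : Ideal R} (hP : P.IsMaximal) : (hahnIdeal ℤ P).IsMaximal := by
  rw [Ideal.isMaximal_iff]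
  refine ⟨fun h ↦ hP.ne_top <| (Ideal.eq_top_iff_one P).mpr (C_mem_hahnIdeal.mp h),
    fun I f hPI hfP hfI ↦ ?_⟩
  obtain ⟨g, u, hu, hgu⟩ := exists_isUnit_mul_sub_mem_hahnIdeal hP hfP
  have u_mem : u ∈ I := by
    rw [← sub_sub_cancel (g * f) u]
    exact I.sub_mem (I.mul_mem_left _ hfI) (hPI hgu)
  exact (Ideal.eq_top_iff_one I).mp (Ideal.eq_top_of_isUnit_mem I u_mem hu)

theorem jacobson_laurentSeries_le :
    Ring.jacobson (LaurentSeries R) ≤ hahnIdeal ℤ (Ring.jacobson R) := by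
  intro f hf n
  rw [Ring.jacobson_eq_sInf_isMaximal, Submodule.mem_sInf]
  intro P hP
  have := isMaximal_hahnIdeal hP
  exact Ring.jacobson_le_of_isMaximal (hahnIdeal ℤ P) hf n

theorem jacobson_laurentSeries (hR : IsNilpotent (Ring.jacobson R)) :
    Ring.jacobson (LaurentSeries R) = hahnIdeal ℤ (Ring.jacobson R) :=
  le_antisymm jacobson_laurentSeries_le <| le_jacobson_of_forall_isUnit_one_add fun _ hf ↦
    (isNilpotent_of_mem_hahnIdeal hR hf).isUnit_one_add

theorem isSemilocalRing_of_laurentSeries (h : IsSemilocalRing (LaurentSeries R)) :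
    IsSemilocalRing R := by
  rw [isSemilocalRing_iff_isArtinian_quotient_jacobson] at h ⊢
  let φ (I : Set.Ici (Ring.jacobson R)) : Set.Ici (Ring.jacobson (LaurentSeries R)) :=
    ⟨hahnIdeal ℤ I, jacobson_laurentSeries_le.trans (hahnIdeal_mono I.2)⟩
  have φ_strictMono : StrictMono φ :=
    Monotone.strictMono_of_injective (fun I J hIJ ↦ hahnIdeal_mono hIJ) fun I J hIJ ↦
      Subtype.ext (hahnIdeal_injective (congrArg Subtype.val hIJ))
  exact ((Submodule.comapMkQRelIso _).symm.strictMono.comp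
    (φ_strictMono.comp (Submodule.comapMkQRelIso _).strictMono)).wellFoundedLT

theorem isNilpotent_of_mul_single_sub_C_eq_one {n : ℤ} (hn : 0 < n) {a : R}
    {h : LaurentSeries R} (ha : a ∈ Ring.jacobson R) (hna : h * (single n 1 - C a) = 1) :
    IsNilpotent a := by
  have coeff_eq (i : ℤ) : h.coeff (i - n) - h.coeff i * a = (1 : LaurentSeries R).coeff i := by
    rw [← hna, mul_sub, coeff_sub, coeff_mul_single, mul_one, C_apply, coeff_mul_single_zero]
  have isUnit_coeff : IsUnit (h.coeff (-n)) := by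
    have coeff_eq_zero := coeff_eq 0
    rw [zero_sub, coeff_one, if_pos rfl, sub_eq_iff_eq_add] at coeff_eq_zero
    exact coeff_eq_zero ▸ isUnit_one_add_of_mem_jacobson (Ideal.mul_mem_left _ _ ha)
  have coeff_eq_mul_pow (k : ℕ) : h.coeff (-n * (k + 1)) = h.coeff (-n) * a ^ k := by
    induction k with
    | zero => rw [Nat.cast_zero, zero_add, mul_one, pow_zero, mul_one]
    | succ k ih =>
      have coeff_eq_ne := coeff_eq (-n * (k + 1))
      rw [coeff_one, if_neg (mul_ne_zero (by lia) (by lia)), sub_eq_zero, ih, mul_assoc,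
        ← pow_succ] at coeff_eq_ne
      rw [← coeff_eq_ne]
      push_cast
      ring_nf
  obtain ⟨k, hk⟩ : ∃ k : ℕ, h.coeff (-n * (k + 1)) = 0 := by
    refine ⟨h.order.natAbs, coeff_eq_zero_of_lt_order ?_⟩
    nlinarith [neg_abs_le h.order, Int.natCast_natAbs h.order, abs_nonneg h.order]
  refine ⟨k, isUnit_coeff.mul_right_eq_zero.mp ?_⟩
  rw [← coeff_eq_mul_pow, hk]

theorem isUnit_single_sub_single {i j : ℤ} (hij : i < j) :
    IsUnit (single i 1 - single j 1 : LaurentSeries R) := by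
  obtain ⟨k, rfl⟩ := Int.le.dest hij.le
  have isUnit_one_sub : IsUnit (1 - PowerSeries.X ^ k : PowerSeries R) := by
    rw [PowerSeries.isUnit_iff_constantCoeff, map_sub, map_pow, PowerSeries.constantCoeff_X,
      zero_pow (by grind), map_one, sub_zero]
    exact isUnit_one
  have isUnit_single : IsUnit (single i 1 : LaurentSeries R) :=
    isUnit_iff_exists.mpr ⟨single (-i) 1, by simp, by simp⟩
  simpa [mul_sub] using isUnit_single.mul (isUnit_one_sub.map (ofPowerSeries ℤ R))

theorem isNilpotent_of_mem_jacobson_of_laurentSeries (h : IsSemilocalRing (LaurentSeries R))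
    {a : R} (ha : a ∈ Ring.jacobson R) : IsNilpotent a := by
  have := isSemilocalRing_iff_isSemisimpleRing_quotient_jacobson.mp h
  let π := Ideal.Quotient.mk (Ring.jacobson (LaurentSeries R))
  have π_surjective : Function.Surjective π := Ideal.Quotient.mk_surjective
  have π_single_mem_center (n : ℕ) :
      π (single (n + 1 : ℤ) 1) ∈ Subring.center (LaurentSeries R ⧸ Ring.jacobson _) := by
    rw [Subring.mem_center_iff, π_surjective.forall]
    intro f
    rw [← map_mul, ← map_mul]
    congr 1
    ext i
    rw [coeff_mul_single, coeff_single_mul, mul_one, one_mul]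
  obtain ⟨n, b, hb⟩ := exists_mul_algebraMap_sub_eq_one
    (c := fun n : ℕ ↦ (⟨_, π_single_mem_center n⟩ : Subring.center _)) (fun i j hij ↦
      map_sub π _ _ ▸ (isUnit_single_sub_single (by lia : (i + 1 : ℤ) < j + 1)).map π) (π (C a))
  obtain ⟨h, rfl⟩ := π_surjective b
  obtain ⟨u, hu⟩ : IsUnit (h * (single (n + 1 : ℤ) 1 - C a)) := by
    refine isUnit_of_isUnit_quotient_jacobson ?_
    rw [map_mul, map_sub]
    exact hb.symm ▸ isUnit_one
  refine isNilpotent_of_mul_single_sub_C_eq_one n.cast_add_one_pos (h := ↑u⁻¹ * h) ha ?_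
  rw [mul_assoc, ← hu, u.inv_mul]

theorem IsLocalIdempotent.laurentSeries_C (hR : IsNilpotent (Ring.jacobson R)) {e : R}
    (he : IsLocalIdempotent e) : IsLocalIdempotent (HahnSeries.C e : LaurentSeries R) where
  isIdempotentElem := he.isIdempotentElem.map HahnSeries.C
  isMaximal_colon := by
    rw [jacobson_laurentSeries hR, colon_hahnIdeal_C]
    exact isMaximal_hahnIdeal he.isMaximal_colon

theorem isDistribModule_span_of_laurentSeries (hR : IsNilpotent (Ring.jacobson R)) {e : R}
    (he : IsLocalIdempotent e) {ι : Type*} {N : ι → Ideal (LaurentSeries R)}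
    (hN : ∀ i, IsDistribModule (LaurentSeries R) (N i)) (N_sup : iSup N = ⊤) :
    IsDistribModule R (Ideal.span {e}) := by
  refine ((he.laurentSeries_C hR).isDistribModule_span hN N_sup).of_latticeHom
    (hahnIdealLatticeHom ℤ R) hahnIdeal_injective fun f hf ↦ Ideal.mem_span_singleton'.mpr ⟨f, ?_⟩
  ext n
  obtain ⟨r, hr⟩ := Ideal.mem_span_singleton'.mp (hf n)
  rw [C_apply, coeff_mul_single_zero, ← hr, mul_assoc, he.isIdempotentElem.eq]

end LaurentSeries

theorem isIsotypicOfType_fun {R T ι : Type*} [Ring R] [AddCommGroup T] [Module R T]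
    [IsSimpleModule R T] : IsIsotypicOfType R (ι → T) T := by
  intro S hS
  obtain ⟨x, hx⟩ := S.ne_bot_iff.mp (S.nontrivial_iff_ne_bot.mp hS.nontrivial)
  obtain ⟨i, hi⟩ := Function.ne_iff.mp hx.2
  have proj_ne_zero : LinearMap.proj i ∘ₗ S.subtype ≠ 0 := fun h ↦
    hi (LinearMap.congr_fun h ⟨x, hx.1⟩)
  exact ⟨.ofBijective _ (LinearMap.bijective_of_ne_zero proj_ne_zero)⟩

section Noetherian

open HahnSeries Filter

variable {R : Type*} [Ring R]

theorem exists_colon_le_of_lt {ι : Type*} [Fintype ι] {e : ι → R} (he_sum : ∑ i, e i = 1)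
    (he : ∀ i, IsLocalIdempotent (e i)) {Y Z : Ideal R} (hYZ : Y < Z) :
    ∃ i, ∃ b ∈ Z, Y.colon {b} ≤ (Ring.jacobson R).colon {e i} := by
  obtain ⟨c, hcZ, hcY⟩ := SetLike.exists_of_lt hYZ
  have colon_ne_top : Y.colon {c} ≠ ⊤ := fun h ↦ hcY <| by
    rw [Ideal.eq_top_iff_one, Submodule.mem_colon_singleton, one_smul] at h
    exact h
  obtain ⟨P, hP, hYP⟩ := Ideal.exists_le_maximal _ colon_ne_top
  obtain ⟨i, hi⟩ : ∃ i, e i ∉ P := by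
    by_contra! h
    exact hP.ne_top <| (Ideal.eq_top_iff_one P).mpr (he_sum ▸ P.sum_mem fun i _ ↦ h i)
  have colon_eq : (Ring.jacobson R).colon {e i} = P.colon {e i} := by
    refine (he i).isMaximal_colon.eq_of_le (fun h ↦ hi ?_)
      (Submodule.colon_mono (Ring.jacobson_le_of_isMaximal P) le_rfl)
    rw [Ideal.eq_top_iff_one, Submodule.mem_colon_singleton, one_smul] at h
    exact h
  refine ⟨i, e i * c, Z.mul_mem_left _ hcZ, fun r hr ↦ ?_⟩
  rw [colon_eq, Submodule.mem_colon_singleton]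
  refine hYP ?_
  rwa [Submodule.mem_colon_singleton, smul_assoc, ← Submodule.mem_colon_singleton]

theorem exists_monotone_of_not_isNoetherianRing {ι : Type*} [Fintype ι] {e : ι → R}
    (he_sum : ∑ i, e i = 1) (he : ∀ i, IsLocalIdempotent (e i)) (hR : ¬ IsNoetherianRing R) :
    ∃ (i : ι) (X : ℕ → Ideal R) (a : ℕ → R), Monotone X ∧ (∀ k, a k ∈ X (k + 1)) ∧
      ∀ k, (X k).colon {a k} ≤ (Ring.jacobson R).colon {e i} := by
  obtain ⟨Y, hY⟩ : ∃ Y : ℕ → Ideal R, StrictMono Y := by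
    by_contra! h
    refine hR ((isNoetherian_iff'.trans (isWellFounded_iff _ _)).mpr ?_)
    exact wellFounded_iff_isEmpty_descending_chain.mpr
      ⟨fun Y ↦ h Y.1 (strictMono_nat_of_lt_succ Y.2)⟩
  choose index b hb_mem hb_colon using
    fun k : ℕ ↦ exists_colon_le_of_lt he_sum he (hY (Nat.lt_succ_self k))
  obtain ⟨i, hi⟩ := Finite.exists_infinite_fiber index
  obtain ⟨n, n_strictMono, hn⟩ := extraction_of_frequently_atTop
    (Nat.frequently_atTop_iff_infinite.mpr (Set.infinite_coe_iff.mp hi))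
  refine ⟨i, Y ∘ n, b ∘ n, hY.monotone.comp n_strictMono.monotone, fun k ↦ ?_, fun k ↦ ?_⟩
  · exact hY.monotone (n_strictMono k.lt_succ_self) (hb_mem _)
  · have index_eq : index (n k) = i := hn k
    exact index_eq ▸ hb_colon (n k)

/-- The series `∑ k, a k * x ^ k ^ 2`. The growing gaps between its exponents isolate the term
of a given index in products with a fixed Laurent series. -/
noncomputable def sparseSeries (a : ℕ → R) : LaurentSeries R :=
  embDomain (.ofStrictMono (fun k : ℕ ↦ (k : ℤ) ^ 2)
      fun _ _ h ↦ pow_lt_pow_left₀ (Nat.cast_lt.mpr h) (Nat.cast_nonneg _) two_ne_zero)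
    ⟨a, Set.isPWO_of_wellQuasiOrderedLE _⟩

theorem coeff_sparseSeries_sq (a : ℕ → R) (k : ℕ) : (sparseSeries a).coeff (k ^ 2) = a k :=
  embDomain_coeff

theorem coeff_sparseSeries_of_forall_ne (a : ℕ → R) {n : ℤ} (hn : ∀ k : ℕ, k ^ 2 ≠ n) :
    (sparseSeries a).coeff n = 0 :=
  embDomain_of_notMem_range fun ⟨k, hk⟩ ↦ hn k hk

variable {X : ℕ → Ideal R} {a : ℕ → R}

theorem coeff_mul_sparseSeries_sub_mem (hX : Monotone X) (ha : ∀ k, a k ∈ X (k + 1))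
    {q : LaurentSeries R} {t : ℤ} {k : ℕ} (hk : t - q.order < 2 * k + 1) :
    (q * sparseSeries a).coeff (t + k ^ 2) - q.coeff t * a k ∈ X k := by
  rw [← coeff_mul_single_add, ← coeff_sub, ← mul_sub]
  refine hahnSeries_coeff_mul_mem fun i j hij ↦ ?_
  obtain hi | hi := lt_or_ge i q.order
  · rw [coeff_eq_zero_of_lt_order hi, zero_mul]
    exact (X k).zero_mem
  refine (X k).mul_mem_left _ ?_
  rw [coeff_sub]
  by_cases hj : ∃ l : ℕ, l ^ 2 = j
  · obtain ⟨l, rfl⟩ := hj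
    have hlk : l < k + 1 := by
      zify
      refine lt_of_pow_lt_pow_left₀ 2 (by positivity) ?_
      linarith
    obtain rfl | hlk := (Nat.lt_succ_iff.mp hlk).eq_or_lt
    · rw [coeff_sparseSeries_sq, coeff_single_same, sub_self]
      exact (X l).zero_mem
    · rw [coeff_sparseSeries_sq, coeff_single_of_ne
        (by exact_mod_cast (Nat.pow_lt_pow_left hlk two_ne_zero).ne), sub_zero]
      exact hX hlk (ha l)
  · push Not at hj
    rw [coeff_sparseSeries_of_forall_ne a hj, coeff_single_of_ne (hj k).symm, sub_zero]
    exact (X k).zero_mem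

/- Modulo `X k`, the coefficient of the vanishing sum at `t + k ^ 2` is `(q l).coeff t * a k`, for
any large `k` with `c k = l`. -/
theorem mem_hahnIdeal_of_sum_mul_sparseSeries_eq_zero (hX : Monotone X)
    (ha : ∀ k, a k ∈ X (k + 1)) {Q : Ideal R} (hQ : ∀ k, (X k).colon {a k} ≤ Q) {ι : Type*}
    [Fintype ι] [DecidableEq ι] {c : ℕ → ι} (hc : ∀ l, ∃ᶠ k in atTop, c k = l)
    {q : ι → LaurentSeries R}
    (hq : ∑ l, q l * sparseSeries (fun k ↦ (Pi.single (c k) (a k) : ι → R) l) = 0) (l : ι) :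
    q l ∈ hahnIdeal ℤ Q := by
  intro t
  have single_mem (l : ι) (k : ℕ) : (Pi.single (c k) (a k) : ι → R) l ∈ X (k + 1) := by
    rw [Pi.single_apply]
    split_ifs
    exacts [ha k, (X _).zero_mem]
  have eventually_lt : ∀ᶠ k : ℕ in atTop, ∀ l, t - (q l).order < 2 * k + 1 :=
    eventually_all.mpr fun l ↦
      (eventually_ge_atTop (t - (q l).order).natAbs).mono fun k hk ↦ by lia
  obtain ⟨k, rfl, hk⟩ := ((hc l).and_eventually eventually_lt).exists
  have sum_mem := (X k).sum_mem (t := Finset.univ) fun l _ ↦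
    coeff_mul_sparseSeries_sub_mem hX (single_mem l) (hk l)
  have sum_eq : ∑ l, (q l).coeff t * (Pi.single (c k) (a k) : ι → R) l =
      (q (c k)).coeff t * a k := by
    simp only [Pi.single_apply, mul_ite, mul_zero, Finset.sum_ite_eq', Finset.mem_univ, if_true]
  rw [Finset.sum_sub_distrib, ← coeff_sum, hq, coeff_zero, zero_sub, neg_mem_iff,
    sum_eq] at sum_mem
  exact hQ k (Submodule.mem_colon_singleton.mpr sum_mem)

theorem isSubquotient_pi_quotient_hahnIdeal (hX : Monotone X) (ha : ∀ k, a k ∈ X (k + 1))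
    {Q : Ideal R} (hQ : ∀ k, (X k).colon {a k} ≤ Q) (m : ℕ) :
    IsSubquotient (LaurentSeries R) (LaurentSeries R)
      (Fin m → LaurentSeries R ⧸ hahnIdeal ℤ Q) := by
  obtain _ | m := m
  · exact ⟨⊥, 0, Function.surjective_to_subsingleton _⟩
  have frequently_eq (l : Fin (m + 1)) : ∃ᶠ k in atTop, Fin.ofNat (m + 1) k = l :=
    (Nat.frequently_mod_eq l.2).mono fun k hk ↦ Fin.ext hk
  refine .of_ker_le
    (Fintype.linearCombination (LaurentSeries R) fun l ↦
      sparseSeries fun k ↦ (Pi.single (Fin.ofNat (m + 1) k) (a k) : Fin (m + 1) → R) l)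
    ((hahnIdeal ℤ Q).mkQ.compLeft (Fin (m + 1))) (Submodule.mkQ_surjective _).comp_left
    fun q hq ↦ funext fun l ↦ (Submodule.Quotient.mk_eq_zero _).mpr ?_
  exact mem_hahnIdeal_of_sum_mul_sparseSeries_eq_zero hX ha hQ frequently_eq hq l

theorem isNoetherianRing_of_laurentSeries {κ : Type*} [Fintype κ] {e : κ → R}
    (he_sum : ∑ i, e i = 1) (he : ∀ i, IsLocalIdempotent (e i)) {ι : Type*}
    {N : ι → Ideal (LaurentSeries R)} (hN : ∀ i, IsDistribModule (LaurentSeries R) (N i))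
    (N_sup : iSup N = ⊤) : IsNoetherianRing R := by
  by_contra hR
  obtain ⟨i, X, a, hX, ha, hQ⟩ := exists_monotone_of_not_isNoetherianRing he_sum he hR
  set Q := (Ring.jacobson R).colon {e i}
  obtain ⟨s, hs⟩ := Submodule.mem_iSup_iff_exists_finset.mp
    (N_sup ▸ Submodule.mem_top : (1 : LaurentSeries R) ∈ iSup N)
  rw [← Finset.sup_eq_iSup, ← Ideal.eq_top_iff_one] at hs
  have isSimple : IsSimpleModule (LaurentSeries R) (LaurentSeries R ⧸ hahnIdeal ℤ Q) :=
    isSimpleModule_iff_isCoatom.mpr (isMaximal_hahnIdeal (he i).isMaximal_colon).out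
  have isSubquotient : IsSubquotient (LaurentSeries R) (s.sup N : Ideal (LaurentSeries R))
      (Fin (s.card + 1) → LaurentSeries R ⧸ hahnIdeal ℤ Q) :=
    hs ▸ (isSubquotient_pi_quotient_hahnIdeal hX ha hQ _).of_linearEquiv Submodule.topEquiv.symm
  have length_le := length_le_card_of_isSubquotient_sup isIsotypicOfType_fun (fun i _ ↦ hN i)
    isSubquotient
  rw [Module.length_pi, Module.length_eq_one, mul_one, ENat.card_eq_coe_fintype_card,
    Fintype.card_fin, Nat.cast_le] at length_le
  exact s.card.not_succ_le_self length_le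

end Noetherian

theorem isArtinianRing_and_exists_idempotents_of_laurentSeries {R ι : Type*} [Ring R]
    (h : IsSemilocalRing (LaurentSeries R)) {N : ι → Ideal (LaurentSeries R)}
    (hN : ∀ i, IsDistribModule (LaurentSeries R) (N i)) (N_sup : iSup N = ⊤) :
    IsArtinianRing R ∧ ∃ (n : ℕ) (e : Fin n → R), CompleteOrthogonalIdempotents e ∧
      ∀ i, IsDistribModule R (Ideal.span {e i}) := by
  have nil_jacobson (a) (ha : a ∈ Ring.jacobson R) : IsNilpotent a :=
    isNilpotent_of_mem_jacobson_of_laurentSeries h ha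
  have isSemilocal : IsSemilocalRing R := isSemilocalRing_of_laurentSeries h
  obtain ⟨n, e, he, he_local⟩ := isSemilocal.exists_completeOrthogonalIdempotents nil_jacobson
  have isNoetherian : IsNoetherianRing R :=
    isNoetherianRing_of_laurentSeries he.complete he_local hN N_sup
  have isNilpotent_jacobson : IsNilpotent (Ring.jacobson R) :=
    isNilpotent_ideal_of_forall_isNilpotent nil_jacobson
  have isSemiprimary : IsSemiprimaryRing R :=
    ⟨isSemilocalRing_iff_isSemisimpleRing_quotient_jacobson.mp isSemilocal, isNilpotent_jacobson⟩
  exact ⟨IsSemiprimaryRing.isNoetherian_iff_isArtinian.mp isNoetherian, n, e, he, fun i ↦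
    isDistribModule_span_of_laurentSeries isNilpotent_jacobson (he_local i) hN N_sup⟩

section Opposite

open HahnSeries MulOpposite

variable {Γ R S : Type*} [Ring R] [Ring S]

variable (Γ R) in
/-- Taking opposites coefficientwise identifies Hahn series over the opposite ring with the
opposite of the ring of Hahn series. -/
def hahnSeriesMulOppositeEquiv [PartialOrder Γ] [AddCommMonoid Γ] [IsOrderedCancelAddMonoid Γ] :
    HahnSeries Γ Rᵐᵒᵖ ≃+* (HahnSeries Γ R)ᵐᵒᵖ where
  toFun f := op (f.map (opAddEquiv (α := R)).symm)
  invFun f := f.unop.map (opAddEquiv (α := R))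
  left_inv _ := rfl
  right_inv _ := rfl
  map_add' _ _ := rfl
  map_mul' f g := by
    refine unop_injective (HahnSeries.ext (funext fun n ↦ ?_))
    change unop ((f * g).coeff n) =
      (g.map (opAddEquiv (α := R)).symm * f.map (opAddEquiv (α := R)).symm :).coeff n
    rw [coeff_mul, coeff_mul, Finset.unop_sum]
    refine Finset.sum_equiv (Equiv.prodComm Γ Γ) (fun ij ↦ ?_) fun _ _ ↦ rfl
    simp [Finset.mem_antidiagonal, and_left_comm, add_comm]

/-- For a ring `S` isomorphic to the opposite of `R`, the right ideals of `R` correspond to the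
left ideals of `S`. -/
def rightIdealOrderIso (e : S ≃+* Rᵐᵒᵖ) : Submodule Rᵐᵒᵖ R ≃o Ideal S :=
  letI := RingHomInvPair.of_ringEquiv e.symm
  letI := this.symm
  Submodule.orderIsoMapComap
    ({ opAddEquiv.trans e.symm.toAddEquiv with
      map_smul' := fun c r ↦ map_mul e.symm c (op r) } : R ≃ₛₗ[(e.symm : Rᵐᵒᵖ →+* S)] S)

theorem IsDistribModule.map_orderIso {M M' : Type*} [AddCommGroup M] [Module R M]
    [AddCommGroup M'] [Module S M'] {N : Submodule R M} (h : IsDistribModule R N)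
    (φ : Submodule R M ≃o Submodule S M') : IsDistribModule S (φ N) :=
  h.of_latticeHom (φ.symm : LatticeHom (Submodule S M') (Submodule R M)) φ.symm.injective
    (φ.symm_apply_apply N).le

end Opposite

theorem stmt0_general {A ι : Type*} [Ring A] (hsl : IsSemilocalRing (LaurentSeries A))
    {N : ι → Submodule (LaurentSeries A)ᵐᵒᵖ (LaurentSeries A)}
    (hN : ∀ i, IsDistribModule (LaurentSeries A)ᵐᵒᵖ (N i)) (N_sup : iSup N = ⊤) :
    IsRightSemidistributiveRing A ∧ IsArtinian Aᵐᵒᵖ A := by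
  let Φ := rightIdealOrderIso (hahnSeriesMulOppositeEquiv ℤ A)
  let φ := (rightIdealOrderIso (.refl Aᵐᵒᵖ)).symm
  have isSemilocal_op : IsSemilocalRing (LaurentSeries Aᵐᵒᵖ) :=
    hsl.of_ringEquiv_mulOpposite (hahnSeriesMulOppositeEquiv ℤ A)
  obtain ⟨isArtinian_op, n, e, he, he_distrib⟩ :=
    isArtinianRing_and_exists_idempotents_of_laurentSeries isSemilocal_op
      (fun i ↦ (hN i).map_orderIso Φ) (by rw [← Φ.map_iSup, N_sup, Φ.map_top])
  have iSup_span : ⨆ i, φ (Ideal.span {e i}) = ⊤ := by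
    rw [← φ.map_iSup, iSup_span_eq_top_of_completeOrthogonalIdempotents he, φ.map_top]
  exact ⟨⟨Fin n, fun i ↦ φ (Ideal.span {e i}),
    (iSupIndep_span_of_orthogonalIdempotents he.toOrthogonalIdempotents).map_orderIso φ,
    iSup_span, fun i ↦ (he_distrib i).map_orderIso φ⟩, φ.symm.strictMono.wellFoundedLT⟩

/-- If the Laurent series ring `A((x))` is a right semidistributive semilocal ring,
then `A` is a right semidistributive right Artinian ring. -/
theorem stmt0 (A : Type*) [Ring A]
    (hsd : IsRightSemidistributiveRing (LaurentSeries A))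
    (hsl : IsSemilocalRing (LaurentSeries A)) :
    IsRightSemidistributiveRing A ∧ IsArtinian Aᵐᵒᵖ A := by
  obtain ⟨ι, N, -, N_sup, hN⟩ := hsd
  exact stmt0_general hsl hN N_sup
end

section
/- Let A be a right semidistributive right Artinian ring. Then the Laurent series ring A((x)) is a right semidistributive right Artinian ring. -/
/-!
Write `U((x))` for the series with coefficients in a right ideal `U` of `A`. The point is that, for
`N` distributive, every `A((x))`-submodule `X` of `N((x))` has the form `U((x))`; the lattices of
submodules of `N` and of `N((x))` are then isomorphic, and both properties are properties of these
lattices. As `1` is a sum of local idempotents `e`, it suffices to treat `f ∈ X` with `f e = f`. By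
distributivity the right ideals `f_k A` form a chain. If `f_j A` is the largest of them, and `j` is
the least index at which it occurs, then `f = f_j b` where `b_j = 1` and `b_k` lies in the nilpotent
Jacobson radical for `k < j`. Such a `b` is invertible in `A((x))`, so `f_j ∈ X`.
-/

open HahnSeries MulOpposite

theorem IsDistribModule.of_orderIso {R S M N : Type*} [Ring R] [AddCommGroup M] [Module R M]
    [Ring S] [AddCommGroup N] [Module S N] (hM : IsDistribModule R M)
    (φ : Submodule R M ≃o Submodule S N) : IsDistribModule S N := fun X Y Z ↦
  φ.symm.injective <| by simpa only [map_inf, map_sup] using hM (φ.symm X) (φ.symm Y) (φ.symm Z)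

theorem IsDistribModule.exists_smul_eq_smul {R M : Type*} [Ring R] [AddCommGroup M] [Module R M]
    (hM : IsDistribModule R M) (m n : M) :
    ∃ a p q : R, a • m = p • n ∧ (1 - a) • n = q • m := by
  have hm : m ∈ Submodule.span R {m} ⊓ (Submodule.span R {n} ⊔ Submodule.span R {m - n}) :=
    ⟨Submodule.mem_span_singleton_self m, by
      simpa using Submodule.add_mem_sup (Submodule.mem_span_singleton_self (R := R) n)
        (Submodule.mem_span_singleton_self (R := R) (m - n))⟩
  rw [hM] at hm
  obtain ⟨y, ⟨-, hy⟩, z, ⟨hz, hz'⟩, hyz⟩ := Submodule.mem_sup.1 hm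
  obtain ⟨p, rfl⟩ := Submodule.mem_span_singleton.1 hy
  obtain ⟨q, rfl⟩ := Submodule.mem_span_singleton.1 hz
  obtain ⟨b, hb⟩ := Submodule.mem_span_singleton.1 hz'
  have hbn : b • n = b • m - q • m := by rw [← hb, smul_sub, sub_sub_cancel]
  refine ⟨1 - b, p - b, b - q, ?_, ?_⟩
  · rw [sub_smul, sub_smul, one_smul, hbn]
    nth_rw 1 [← hyz]
    abel
  · rw [sub_sub_cancel, hbn, sub_smul]

theorem isArtinian_of_finite_ne_bot_of_iSup_eq_top {R M ι : Type*} [Ring R] [AddCommGroup M]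
    [Module R M] {N : ι → Submodule R M} (hfin : {i | N i ≠ ⊥}.Finite) (htop : iSup N = ⊤)
    (hN : ∀ i, IsArtinian R (N i)) : IsArtinian R M := by
  have : Finite {i // N i ≠ ⊥} := hfin.to_subtype
  rw [← iSup_ne_bot_subtype] at htop
  rw [← Submodule.topEquiv.isArtinian_iff, ← htop]
  exact isArtinian_iSup

section Jacobson

variable {R : Type*} [Ring R] {x : R}

theorem mem_jacobson_of_forall_isNilpotent_mul (h : ∀ y, IsNilpotent (y * x)) :
    x ∈ Ring.jacobson R := by
  rw [← Ideal.jacobson_bot, Ideal.mem_jacobson_iff]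
  intro y
  obtain ⟨u, hu⟩ := (h y).isUnit_one_add
  refine ⟨↑u⁻¹, ?_⟩
  rw [Ideal.mem_bot, sub_eq_zero, mul_assoc, add_comm, ← mul_one_add, ← hu, u.inv_mul]

theorem exists_mul_one_sub_eq_one_of_mem_jacobson (hx : x ∈ Ring.jacobson R) :
    ∃ z, z * (1 - x) = 1 := by
  rw [← Ideal.jacobson_bot, Ideal.mem_jacobson_iff] at hx
  obtain ⟨z, hz⟩ := hx (-1)
  refine ⟨z, ?_⟩
  rw [Ideal.mem_bot, sub_eq_zero] at hz
  rw [mul_sub, mul_one, sub_eq_neg_add, ← neg_mul, ← mul_neg_one, hz]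

end Jacobson

section RightArtinian

variable {A : Type*} [Ring A] [IsArtinian Aᵐᵒᵖ A]

theorem isArtinianRing_mulOpposite : IsArtinianRing Aᵐᵒᵖ :=
  (opLinearEquiv Aᵐᵒᵖ (M := A)).isArtinian_iff.1 ‹_›

instance isNoetherian_right_of_isArtinian : IsNoetherian Aᵐᵒᵖ A :=
  have := isArtinianRing_mulOpposite (A := A)
  (opLinearEquiv Aᵐᵒᵖ (M := A)).isNoetherian_iff.2 inferInstance

theorem isNilpotent_jacobson_mulOpposite : IsNilpotent (Ring.jacobson Aᵐᵒᵖ) :=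
  have := isArtinianRing_mulOpposite (A := A)
  IsSemiprimaryRing.isNilpotent

theorem exists_isIdempotentElem_mul_eq (c : A) :
    ∃ (n : ℕ) (b g : A), IsIdempotentElem g ∧ c * b = g ∧ c ^ n * g = c ^ n := by
  obtain ⟨n, hcompl, hn⟩ := ((LinearMap.mulLeft Aᵐᵒᵖ c).eventually_isCompl_ker_pow_range_pow.and
    (Filter.eventually_gt_atTop 0)).exists
  have hpow (y : A) : (LinearMap.mulLeft Aᵐᵒᵖ c ^ n) y = c ^ n * y := by
    rw [Module.End.pow_apply]
    exact congrFun (mul_left_iterate c n) y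
  obtain ⟨k, hk, -, ⟨z, rfl⟩, hkz⟩ :=
    Submodule.mem_sup.1 (hcompl.sup_eq_top ▸ Submodule.mem_top (x := (1 : A)))
  rw [LinearMap.mem_ker, hpow] at hk
  rw [hpow] at hkz
  set g := c ^ n * z with hg
  have hkg : k * g = 0 := by
    refine Submodule.disjoint_def.1 hcompl.disjoint _ ?_ ⟨z - z * g, ?_⟩
    · rw [LinearMap.mem_ker, hpow, ← mul_assoc, hk, zero_mul]
    · rw [hpow, mul_sub, ← mul_assoc, ← hg, eq_sub_of_add_eq hkz, sub_mul, one_mul]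
  refine ⟨n, c ^ (n - 1) * z, g, ?_, ?_, ?_⟩
  · rw [IsIdempotentElem, ← sub_eq_zero, ← neg_eq_zero, ← hkg, eq_sub_of_add_eq hkz]
    noncomm_ring
  · rw [← mul_assoc, mul_pow_sub_one hn.ne']
  · rw [eq_sub_of_add_eq' hkz, mul_sub, hk, mul_one, sub_zero]

end RightArtinian

section LocalIdempotent

variable {A : Type*} [Ring A] {e g : A}

/-- An idempotent `e` is *local* if every element of the right ideal `e A` lies in the Jacobson
radical or generates `e A`. For `e ≠ 0` this says that `e A` is a local module, equivalently that
`e A e` is a local ring; we also admit `e = 0`. The radical is that of `Aᵐᵒᵖ`, whose ideals are the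
right ideals of `A`. -/
structure IsLocalIdempotent_s1 (e : A) : Prop where
  isIdempotentElem : IsIdempotentElem e
  mem_jacobson_or_exists_mul_eq (a : A) : op (e * a) ∈ Ring.jacobson Aᵐᵒᵖ ∨ ∃ b, e * a * b = e

namespace IsLocalIdempotent_s1

theorem exists_mul_eq_or_exists_one_sub_mul_eq (he : IsLocalIdempotent_s1 e) (a : A) :
    (∃ b, e * a * b = e) ∨ ∃ b, e * (1 - a) * b = e := by
  refine (he.mem_jacobson_or_exists_mul_eq a).symm.imp_right fun ha ↦ ?_
  obtain ⟨z, hz⟩ := exists_mul_one_sub_eq_one_of_mem_jacobson ha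
  refine ⟨z.unop, ?_⟩
  calc e * (1 - a) * z.unop = e * ((1 - e * a) * z.unop) := by
        rw [← mul_assoc, mul_sub e 1 (e * a), ← mul_assoc, he.isIdempotentElem.eq, mul_sub]
    _ = e := by rw [show (1 - e * a) * z.unop = 1 from congrArg unop hz, mul_one]

theorem mem_span_or_mem_span (he : IsLocalIdempotent_s1 e) {N : Submodule Aᵐᵒᵖ A}
    (hN : IsDistribModule Aᵐᵒᵖ N) {m n : A} (hm : m ∈ N) (hn : n ∈ N)
    (hme : m * e = m) (hne : n * e = n) :
    m ∈ Submodule.span Aᵐᵒᵖ {n} ∨ n ∈ Submodule.span Aᵐᵒᵖ {m} := by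
  obtain ⟨a, p, q, hmn, hnm⟩ := hN.exists_smul_eq_smul ⟨m, hm⟩ ⟨n, hn⟩
  replace hmn : m * a.unop = n * p.unop := congrArg Subtype.val hmn
  replace hnm : n * (1 - a.unop) = m * q.unop := congrArg Subtype.val hnm
  simp only [Submodule.mem_span_singleton]
  refine (he.exists_mul_eq_or_exists_one_sub_mul_eq a.unop).imp ?_ ?_
  · rintro ⟨b, hb⟩
    refine ⟨op (p.unop * b), ?_⟩
    rw [op_smul_eq_mul, ← mul_assoc, ← hmn, ← hme, mul_assoc m, mul_assoc, hb]
  · rintro ⟨b, hb⟩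
    refine ⟨op (q.unop * b), ?_⟩
    rw [op_smul_eq_mul, ← mul_assoc, ← hnm, ← hne, mul_assoc n, mul_assoc, hb]

theorem exists_mem_jacobson_mul_eq (he : IsLocalIdempotent_s1 e) {m n : A} (hne : n * e = n)
    (hm : m ∈ Submodule.span Aᵐᵒᵖ {n}) (hn : n ∉ Submodule.span Aᵐᵒᵖ {m}) :
    ∃ a, op a ∈ Ring.jacobson Aᵐᵒᵖ ∧ n * a = m := by
  obtain ⟨a, rfl⟩ := Submodule.mem_span_singleton.1 hm
  have hna : n * (e * a.unop) = n * a.unop := by rw [← mul_assoc, hne]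
  refine ⟨e * a.unop, (he.mem_jacobson_or_exists_mul_eq a.unop).resolve_right ?_, hna⟩
  rintro ⟨b, hb⟩
  refine hn (Submodule.mem_span_singleton.2 ⟨op b, ?_⟩)
  change n * a.unop * b = n
  rw [← hna, mul_assoc, hb, hne]

theorem of_forall_isIdempotentElem [IsArtinian Aᵐᵒᵖ A] (he : IsIdempotentElem e)
    (h : ∀ g, IsIdempotentElem g → e * g = g → g * e = g → g = 0 ∨ g = e) :
    IsLocalIdempotent_s1 e := by
  refine ⟨he, fun a ↦ ?_⟩
  by_cases hnil : ∀ r, IsNilpotent (e * a * r)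
  · exact .inl <| mem_jacobson_of_forall_isNilpotent_mul fun y ↦
      (hnil y.unop).imp fun _ hn ↦ unop_injective hn
  push Not at hnil
  obtain ⟨r, hr⟩ := hnil
  set c := e * a * r with hc
  have hec : e * c = c := by simp only [hc, ← mul_assoc, he.eq]
  obtain ⟨n, b, g, hg, hcb, hcg⟩ := exists_isIdempotentElem_mul_eq c
  have heg : e * g = g := by rw [← hcb, ← mul_assoc, hec]
  obtain hge | hge := h (g * e)
    (by rw [IsIdempotentElem, mul_assoc, ← mul_assoc e, heg, ← mul_assoc, hg.eq])
    (by rw [← mul_assoc, heg]) (by rw [mul_assoc, he.eq])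
  · refine absurd ⟨n + 1, ?_⟩ hr
    calc c ^ (n + 1) = c ^ n * g * (e * c) := by rw [hcg, hec, pow_succ]
      _ = c ^ n * (g * e) * c := by noncomm_ring
      _ = 0 := by rw [hge, mul_zero, zero_mul]
  · exact .inr ⟨r * b * e, by rw [← mul_assoc, ← mul_assoc, ← hc, hcb, hge]⟩

end IsLocalIdempotent_s1

theorem span_singleton_lt_span_singleton_of_mul_eq (hg : IsIdempotentElem g)
    (heg : e * g = g) (hge : g * e = g) (hne : g ≠ e) :
    Submodule.span Aᵐᵒᵖ {g} < Submodule.span Aᵐᵒᵖ {e} := by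
  refine lt_of_le_not_ge ?_ fun hle ↦ hne ?_
  · exact (Submodule.span_singleton_le_iff_mem _ _).2 (Submodule.mem_span_singleton.2 ⟨op g, heg⟩)
  · obtain ⟨x, hx⟩ := Submodule.mem_span_singleton.1 (hle (Submodule.mem_span_singleton_self e))
    replace hx : g * x.unop = e := hx
    rw [← hge, ← hx, ← mul_assoc, hg.eq]

theorem mem_closure_isLocalIdempotent [IsArtinian Aᵐᵒᵖ A] (he : IsIdempotentElem e) :
    e ∈ AddSubmonoid.closure {e : A | IsLocalIdempotent_s1 e} := by
  induction h : Submodule.span Aᵐᵒᵖ {e} using WellFoundedLT.induction generalizing e with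
  | ind I ih =>
    subst h
    by_cases hsplit : ∀ g, IsIdempotentElem g → e * g = g → g * e = g → g = 0 ∨ g = e
    · exact AddSubmonoid.subset_closure (.of_forall_isIdempotentElem he hsplit)
    push Not at hsplit
    obtain ⟨g, hg, heg, hge, hg0, hgne⟩ := hsplit
    have hsub : IsIdempotentElem (e - g) := by
      rw [IsIdempotentElem, sub_mul, mul_sub, mul_sub, he.eq, heg, hge, hg.eq, sub_self, sub_zero]
    rw [← add_sub_cancel g e]
    refine add_mem (ih _ (span_singleton_lt_span_singleton_of_mul_eq hg heg hge hgne) hg rfl)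
      (ih _ (span_singleton_lt_span_singleton_of_mul_eq hsub ?_ ?_ ?_) hsub rfl)
    · rw [mul_sub, he.eq, heg]
    · rw [sub_mul, he.eq, hge]
    · rwa [ne_eq, sub_eq_self]

end LocalIdempotent

section Coefficients

variable {Γ : Type*}

theorem exists_hahnSeries_forall_coeff {R S : Type*} [PartialOrder Γ] [Zero R] [Zero S]
    (f : HahnSeries Γ R) {P : Γ → S → Prop} (h : ∀ i, ∃ b, P i b)
    (h0 : ∀ i, f.coeff i = 0 → P i 0) : ∃ g : HahnSeries Γ S, ∀ i, P i (g.coeff i) := by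
  classical
  choose b hb using h
  refine ⟨⟨fun i ↦ if f.coeff i = 0 then 0 else b i, f.isPWO_support.mono fun i hi h ↦ hi ?_⟩,
    fun i ↦ ?_⟩
  · exact if_pos h
  · dsimp only
    split_ifs with hi
    exacts [h0 i hi, hb i]

theorem exists_least_forall_coeff_mem_span_coeff {R M : Type*} [LinearOrder Γ] [Ring R]
    [AddCommGroup M] [Module R M] [IsNoetherian R M] {f : HahnSeries Γ M} (hf : f ≠ 0)
    (hchain : ∀ i k, f.coeff i ∈ Submodule.span R {f.coeff k} ∨
      f.coeff k ∈ Submodule.span R {f.coeff i}) :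
    ∃ j, (∀ k, f.coeff k ∈ Submodule.span R {f.coeff j}) ∧
      ∀ k < j, f.coeff j ∉ Submodule.span R {f.coeff k} := by
  obtain ⟨k₀, hk₀⟩ : ∃ k, f.coeff k ≠ 0 := by
    by_contra! h
    exact hf (HahnSeries.ext (funext h))
  obtain ⟨i, hi⟩ : ∃ i, ∀ k, f.coeff k ∈ Submodule.span R {f.coeff i} := by
    obtain ⟨_, ⟨i, rfl⟩, hmax⟩ := (wellFounded_gt (α := Submodule R M)).has_min
      (Set.range fun i ↦ Submodule.span R {f.coeff i}) ⟨_, k₀, rfl⟩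
    refine ⟨i, fun k ↦ (hchain k i).elim id fun hik ↦ ?_⟩
    rw [← Submodule.span_singleton_le_iff_mem] at hik
    rw [hik.eq_of_not_lt (hmax _ ⟨k, rfl⟩)]
    exact Submodule.mem_span_singleton_self _
  have hi0 : f.coeff i ≠ 0 := fun h ↦ hk₀ (by simpa [h] using hi k₀)
  have hwf : {k | f.coeff i ∈ Submodule.span R {f.coeff k}}.IsWF :=
    f.isWF_support.mono fun k hk h ↦ hi0 (by simpa [h] using hk)
  have hne : {k | f.coeff i ∈ Submodule.span R {f.coeff k}}.Nonempty :=
    ⟨i, Submodule.mem_span_singleton_self _⟩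
  have hle {x y : M} (hxy : x ∈ Submodule.span R {y}) :
      Submodule.span R {x} ≤ Submodule.span R {y} :=
    (Submodule.span_singleton_le_iff_mem _ _).2 hxy
  exact ⟨hwf.min hne, fun k ↦ hle (hwf.min_mem hne) (hi k), fun k hk h ↦
    hwf.not_lt_min hne (hle h (hwf.min_mem hne)) hk⟩

end Coefficients

section Extension

variable {Γ A : Type*} [Ring A]

section Hahn

variable [AddCommMonoid Γ] [PartialOrder Γ] [IsOrderedCancelAddMonoid Γ]

variable (Γ) in
/-- The right ideal `U((x))` of all series with coefficients in the right ideal `U`, for series with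
exponents in `Γ`. -/
def hahnExtension (U : Submodule Aᵐᵒᵖ A) : Submodule (HahnSeries Γ A)ᵐᵒᵖ (HahnSeries Γ A) where
  carrier := {f | ∀ i, f.coeff i ∈ U}
  add_mem' hf hg i := U.add_mem (hf i) (hg i)
  zero_mem' _ := U.zero_mem
  smul_mem' c f hf i := by
    change (f * c.unop).coeff i ∈ U
    rw [coeff_mul]
    exact U.sum_mem fun p _ ↦ U.smul_mem (op (c.unop.coeff p.2)) (hf p.1)

/-- The right ideal `X ∩ A` of all constants in a right ideal `X` of a ring of series over `A`. -/
def hahnContraction (X : Submodule (HahnSeries Γ A)ᵐᵒᵖ (HahnSeries Γ A)) : Submodule Aᵐᵒᵖ A where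
  carrier := {u | C u ∈ X}
  add_mem' {a b} ha hb := by
    rw [Set.mem_ofPred_eq, map_add]
    exact X.add_mem ha hb
  zero_mem' := by
    rw [Set.mem_ofPred_eq, map_zero]
    exact X.zero_mem
  smul_mem' c u hu := by
    change C (u * c.unop) ∈ X
    rw [map_mul]
    exact X.smul_mem (op (C c.unop)) hu

theorem mem_hahnExtension {U : Submodule Aᵐᵒᵖ A} {f : HahnSeries Γ A} :
    f ∈ hahnExtension Γ U ↔ ∀ i, f.coeff i ∈ U :=
  .rfl

theorem mem_hahnContraction {X : Submodule (HahnSeries Γ A)ᵐᵒᵖ (HahnSeries Γ A)} {u : A} :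
    u ∈ hahnContraction X ↔ C u ∈ X :=
  .rfl

theorem C_mem_hahnExtension {U : Submodule Aᵐᵒᵖ A} {u : A} :
    C u ∈ hahnExtension Γ U ↔ u ∈ U := by
  classical
  refine ⟨fun h ↦ by simpa using h 0, fun h i ↦ ?_⟩
  rw [C_apply, coeff_single]
  split_ifs
  exacts [h, U.zero_mem]

theorem hahnContraction_hahnExtension (U : Submodule Aᵐᵒᵖ A) :
    hahnContraction (hahnExtension Γ U) = U :=
  Submodule.ext fun _ ↦ C_mem_hahnExtension

theorem hahnExtension_inf (U V : Submodule Aᵐᵒᵖ A) :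
    hahnExtension Γ (U ⊓ V) = hahnExtension Γ U ⊓ hahnExtension Γ V :=
  Submodule.ext fun _ ↦ forall_and

theorem hahnExtension_bot : hahnExtension Γ (⊥ : Submodule Aᵐᵒᵖ A) = ⊥ := by
  ext f
  simp only [mem_hahnExtension, Submodule.mem_bot, HahnSeries.ext_iff, funext_iff, coeff_zero]

theorem hahnExtension_top : hahnExtension Γ (⊤ : Submodule Aᵐᵒᵖ A) = ⊤ :=
  eq_top_iff.2 fun _ _ _ ↦ trivial

theorem hahnExtension_mono {U V : Submodule Aᵐᵒᵖ A} (h : U ≤ V) :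
    hahnExtension Γ U ≤ hahnExtension Γ V :=
  fun _ hf i ↦ h (hf i)

theorem hahnExtension_sup_le (U V : Submodule Aᵐᵒᵖ A) :
    hahnExtension Γ (U ⊔ V) ≤ hahnExtension Γ U ⊔ hahnExtension Γ V := by
  intro f hf
  obtain ⟨g, hg⟩ : ∃ g : HahnSeries Γ A, ∀ i, g.coeff i ∈ U ∧ f.coeff i - g.coeff i ∈ V := by
    refine exists_hahnSeries_forall_coeff f (P := fun i b ↦ b ∈ U ∧ f.coeff i - b ∈ V) (fun i ↦ ?_)
      fun i hi ↦ ?_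
    · obtain ⟨u, hu, v, hv, huv⟩ := Submodule.mem_sup.1 (hf i)
      exact ⟨u, hu, by rwa [← huv, add_sub_cancel_left]⟩
    · rw [hi, sub_zero]
      exact ⟨U.zero_mem, V.zero_mem⟩
  exact Submodule.mem_sup.2 ⟨g, fun i ↦ (hg i).1, f - g, fun i ↦ (hg i).2, add_sub_cancel g f⟩

theorem hahnExtension_span_singleton_le (u : A) :
    hahnExtension Γ (Submodule.span Aᵐᵒᵖ {u}) ≤ Submodule.span (HahnSeries Γ A)ᵐᵒᵖ {C u} := by
  intro f hf
  obtain ⟨g, hg⟩ : ∃ g : HahnSeries Γ A, ∀ i, u * g.coeff i = f.coeff i := by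
    refine exists_hahnSeries_forall_coeff f (P := fun i b ↦ u * b = f.coeff i) (fun i ↦ ?_)
      fun i hi ↦ by rw [hi, mul_zero]
    obtain ⟨b, hb⟩ := Submodule.mem_span_singleton.1 (hf i)
    exact ⟨b.unop, hb⟩
  refine Submodule.mem_span_singleton.2 ⟨op g, HahnSeries.ext <| funext fun i ↦ ?_⟩
  rw [op_smul_eq_mul, C_apply, coeff_single_zero_mul, hg]

theorem gc_hahnExtension_hahnContraction [IsNoetherian Aᵐᵒᵖ A] :
    GaloisConnection (hahnExtension Γ (A := A)) hahnContraction := by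
  refine fun U X ↦ ⟨fun h u hu ↦ h (C_mem_hahnExtension.2 hu), ?_⟩
  induction U, IsNoetherian.noetherian U using Submodule.fg_induction with
  | singleton u =>
    intro h
    exact (hahnExtension_span_singleton_le u).trans <|
      (Submodule.span_singleton_le_iff_mem _ _).2 (h (Submodule.mem_span_singleton_self u))
  | sup U V _ _ hU hV =>
    intro h
    exact (hahnExtension_sup_le U V).trans <|
      sup_le (hU (le_sup_left.trans h)) (hV (le_sup_right.trans h))

theorem iSupIndep_hahnExtension [IsNoetherian Aᵐᵒᵖ A] {ι : Type*} {N : ι → Submodule Aᵐᵒᵖ A}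
    (hN : iSupIndep N) : iSupIndep fun i ↦ hahnExtension Γ (N i) := by
  intro i
  simp_rw [← gc_hahnExtension_hahnContraction.l_iSup]
  rw [disjoint_iff, ← hahnExtension_inf, (hN i).eq_bot, hahnExtension_bot]

variable (Γ) in
/-- If every submodule of `N((x))` is extended from `A`, then extension identifies the lattices of
submodules of `N` and of `N((x))`. -/
noncomputable def hahnExtensionOrderIso [IsNoetherian Aᵐᵒᵖ A] {N : Submodule Aᵐᵒᵖ A}
    (hN : ∀ X ≤ hahnExtension Γ N, X ≤ hahnExtension Γ (hahnContraction X)) :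
    Submodule Aᵐᵒᵖ N ≃o Submodule (HahnSeries Γ A)ᵐᵒᵖ (hahnExtension Γ N) :=
  let φ : Set.Iic N ≃o Set.Iic (hahnExtension Γ N) :=
    { toFun := fun U ↦ ⟨hahnExtension Γ U, hahnExtension_mono U.2⟩
      invFun := fun X ↦ ⟨hahnContraction X.1,
        Set.mem_Iic.2 ((gc_hahnExtension_hahnContraction.monotone_u X.2).trans
          (hahnContraction_hahnExtension N).le)⟩
      left_inv := fun U ↦ Subtype.ext (hahnContraction_hahnExtension U.1)
      right_inv := fun X ↦ Subtype.ext <|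
        (gc_hahnExtension_hahnContraction.l_u_le X.1).antisymm (hN X X.2)
      map_rel_iff' := fun {U V} ↦ by
        change hahnExtension Γ U.1 ≤ hahnExtension Γ V.1 ↔ U.1 ≤ V.1
        rw [gc_hahnExtension_hahnContraction, hahnContraction_hahnExtension] }
  N.mapIic.trans (φ.trans (hahnExtension Γ N).mapIic.symm)

theorem op_coeff_pow_mem_pow {I : Ideal Aᵐᵒᵖ} {f : HahnSeries Γ A}
    (hf : ∀ i, op (f.coeff i) ∈ I) (n : ℕ) (i : Γ) : op ((f ^ n).coeff i) ∈ I ^ n := by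
  induction n generalizing i with
  | zero => rw [Submodule.pow_zero, Ideal.one_eq_top]; trivial
  | succ n ih =>
    rw [pow_succ', Submodule.pow_succ, coeff_mul, Finset.op_sum]
    exact sum_mem fun p _ ↦ Ideal.mul_mem_mul (ih p.2) (hf p.1)

theorem isNilpotent_of_forall_op_coeff_mem {I : Ideal Aᵐᵒᵖ} (hI : IsNilpotent I)
    {f : HahnSeries Γ A} (hf : ∀ i, op (f.coeff i) ∈ I) : IsNilpotent f := by
  obtain ⟨n, hn⟩ := hI
  refine ⟨n, HahnSeries.ext <| funext fun i ↦ op_injective ?_⟩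
  have := op_coeff_pow_mem_pow hf n i
  rwa [hn] at this

end Hahn

section Laurent

variable {b : LaurentSeries A} {j : ℤ}

theorem exists_isUnit_coeff_eq (hj : IsUnit (b.coeff j)) :
    ∃ u : LaurentSeries A, IsUnit u ∧ ∀ i, u.coeff i = if i < j then 0 else b.coeff i := by
  set p : PowerSeries A := .mk fun n ↦ b.coeff (j + n) with hp
  have hpu : IsUnit p := PowerSeries.isUnit_iff_constantCoeff.2 (by simpa [hp] using hj)
  have hx : IsUnit (single j (1 : A)) :=
    ⟨⟨single j 1, single (-j) 1, by simp, by simp⟩, rfl⟩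
  refine ⟨single j 1 * ofPowerSeries ℤ A p, hx.mul (hpu.map (ofPowerSeries ℤ A)), fun i ↦ ?_⟩
  rw [coeff_single_mul, one_mul, PowerSeries.coeff_coe]
  simp only [sub_neg]
  refine if_ctx_congr .rfl (fun _ ↦ rfl) fun hi ↦ ?_
  rw [hp, PowerSeries.coeff_mk]
  congr 1
  lia

theorem isUnit_of_op_coeff_mem {I : Ideal Aᵐᵒᵖ} (hI : IsNilpotent I)
    (hj : IsUnit (b.coeff j)) (hb : ∀ i < j, op (b.coeff i) ∈ I) : IsUnit b := by
  obtain ⟨_, ⟨u, rfl⟩, hu⟩ := exists_isUnit_coeff_eq hj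
  have hbu (i : ℤ) : op ((b - u).coeff i) ∈ I := by
    rw [coeff_sub, hu]
    split_ifs with hi
    · simpa using hb i hi
    · simp
  have hnil : IsNilpotent ((b - u) * ↑u⁻¹) := by
    refine isNilpotent_of_forall_op_coeff_mem hI fun i ↦ ?_
    rw [coeff_mul, Finset.op_sum]
    exact sum_mem fun p _ ↦ I.mul_mem_left _ (hbu p.1)
  have hfactor : b = (1 + (b - u) * ↑u⁻¹) * u := by
    rw [add_mul, one_mul, mul_assoc, u.inv_mul, mul_one, add_sub_cancel]
  rw [hfactor]
  exact hnil.isUnit_one_add.mul u.isUnit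

variable [IsArtinian Aᵐᵒᵖ A] {N : Submodule Aᵐᵒᵖ A}
  {X : Submodule (LaurentSeries A)ᵐᵒᵖ (LaurentSeries A)}

theorem IsLocalIdempotent_s1.exists_isUnit_C_mul_eq {e : A} (he : IsLocalIdempotent_s1 e)
    (hN : IsDistribModule Aᵐᵒᵖ N) {f : LaurentSeries A} (hf : f ∈ hahnExtension ℤ N)
    (hfe : f * C e = f) :
    ∃ (n : A) (b : LaurentSeries A), IsUnit b ∧ C n * b = f ∧
      ∀ k, f.coeff k ∈ Submodule.span Aᵐᵒᵖ {n} := by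
  rcases eq_or_ne f 0 with rfl | hf0
  · exact ⟨0, 1, isUnit_one, by rw [map_zero, zero_mul], fun _ ↦ Submodule.zero_mem _⟩
  have hcoeff (k : ℤ) : f.coeff k * e = f.coeff k := by
    rw [← coeff_mul_single_zero, ← C_apply, hfe]
  obtain ⟨j, hspan, hlt⟩ := exists_least_forall_coeff_mem_span_coeff (R := Aᵐᵒᵖ) hf0 fun i k ↦
    he.mem_span_or_mem_span hN (hf i) (hf k) (hcoeff i) (hcoeff k)
  obtain ⟨b, hb⟩ : ∃ b : LaurentSeries A, ∀ k, f.coeff j * b.coeff k = f.coeff k ∧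
      (k = j → b.coeff k = 1) ∧ (k < j → op (b.coeff k) ∈ Ring.jacobson Aᵐᵒᵖ) := by
    refine exists_hahnSeries_forall_coeff f (P := fun k b ↦ f.coeff j * b = f.coeff k ∧
      (k = j → b = 1) ∧ (k < j → op b ∈ Ring.jacobson Aᵐᵒᵖ)) (fun k ↦ ?_) fun k hk ↦ ?_
    · obtain hkj | rfl | hjk := lt_trichotomy k j
      · obtain ⟨a, ha, hja⟩ := he.exists_mem_jacobson_mul_eq (hcoeff j) (hspan k) (hlt k hkj)
        exact ⟨a, hja, fun h ↦ absurd h hkj.ne, fun _ ↦ ha⟩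
      · exact ⟨1, mul_one _, fun _ ↦ rfl, fun h ↦ absurd h (lt_irrefl k)⟩
      · obtain ⟨a, ha⟩ := Submodule.mem_span_singleton.1 (hspan k)
        exact ⟨a.unop, ha, fun h ↦ absurd h hjk.ne', fun h ↦ absurd h hjk.not_gt⟩
    · refine ⟨by rw [hk, mul_zero], ?_, fun _ ↦ Submodule.zero_mem _⟩
      rintro rfl
      exact absurd (HahnSeries.ext <| funext fun i ↦ by simpa [hk] using hspan i) hf0
  refine ⟨f.coeff j, b, isUnit_of_op_coeff_mem isNilpotent_jacobson_mulOpposite (j := j) ?_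
    fun k hk ↦ (hb k).2.2 hk, HahnSeries.ext <| funext fun k ↦ ?_, hspan⟩
  · rw [(hb j).2.1 rfl]
    exact isUnit_one
  · rw [C_apply, coeff_single_zero_mul, (hb k).1]

theorem IsLocalIdempotent_s1.mem_hahnExtension_hahnContraction {e : A} (he : IsLocalIdempotent_s1 e)
    (hN : IsDistribModule Aᵐᵒᵖ N) {f : LaurentSeries A} (hf : f ∈ hahnExtension ℤ N)
    (hfX : f ∈ X) (hfe : f * C e = f) : f ∈ hahnExtension ℤ (hahnContraction X) := by
  obtain ⟨n, _, ⟨u, rfl⟩, rfl, hspan⟩ := he.exists_isUnit_C_mul_eq hN hf hfe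
  have hn : n ∈ hahnContraction X := by
    rw [mem_hahnContraction, ← u.mul_inv_cancel_right (C n)]
    exact X.smul_mem (op ↑u⁻¹) hfX
  exact fun k ↦ (Submodule.span_singleton_le_iff_mem _ _).2 hn (hspan k)

theorem le_hahnExtension_hahnContraction (hN : IsDistribModule Aᵐᵒᵖ N)
    (hX : X ≤ hahnExtension ℤ N) : X ≤ hahnExtension ℤ (hahnContraction X) := by
  intro f hf
  suffices h : ∀ a ∈ AddSubmonoid.closure {e : A | IsLocalIdempotent_s1 e},
      f * C a ∈ hahnExtension ℤ (hahnContraction X) by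
    simpa using h 1 (mem_closure_isLocalIdempotent .one)
  intro a ha
  induction ha using AddSubmonoid.closure_induction with
  | mem e he =>
    have hfe : f * C e ∈ X := X.smul_mem (op (C e)) hf
    refine he.mem_hahnExtension_hahnContraction hN (hX hfe) hfe ?_
    rw [mul_assoc, ← map_mul, he.isIdempotentElem.eq]
  | zero => simp
  | add a b _ _ ha hb =>
    rw [map_add, mul_add]
    exact add_mem ha hb

theorem isDistribModule_hahnExtension (hN : IsDistribModule Aᵐᵒᵖ N) :
    IsDistribModule (LaurentSeries A)ᵐᵒᵖ (hahnExtension ℤ N) :=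
  hN.of_orderIso (hahnExtensionOrderIso ℤ fun _ ↦ le_hahnExtension_hahnContraction hN)

theorem isArtinian_hahnExtension (hN : IsDistribModule Aᵐᵒᵖ N) :
    IsArtinian (LaurentSeries A)ᵐᵒᵖ (hahnExtension ℤ N) :=
  (hahnExtensionOrderIso ℤ fun _ ↦
    le_hahnExtension_hahnContraction hN).symm.strictMono.wellFoundedLT

end Laurent

end Extension

/-- If `A` is a right semidistributive right Artinian ring, then the Laurent series
ring `A((x))` is a right semidistributive right Artinian ring. -/
theorem stmt1 (A : Type*) [Ring A]
    (hsd : IsRightSemidistributiveRing A)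
    (hart : IsArtinian Aᵐᵒᵖ A) :
    IsRightSemidistributiveRing (LaurentSeries A) ∧
      IsArtinian (LaurentSeries A)ᵐᵒᵖ (LaurentSeries A) := by
  obtain ⟨ι, N, hind, htop, hN⟩ := hsd
  have htop' : ⨆ i, hahnExtension ℤ (N i) = ⊤ := by
    rw [← gc_hahnExtension_hahnContraction.l_iSup, htop, hahnExtension_top]
  refine ⟨⟨ι, fun i ↦ hahnExtension ℤ (N i), iSupIndep_hahnExtension hind, htop',
    fun i ↦ isDistribModule_hahnExtension (hN i)⟩, ?_⟩
  have hfin : {i | hahnExtension ℤ (N i) ≠ ⊥}.Finite := by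
    refine (WellFoundedGT.finite_ne_bot_of_iSupIndep hind).subset fun i hi h ↦ hi ?_
    rw [h, hahnExtension_bot]
  exact isArtinian_of_finite_ne_bot_of_iSup_eq_top hfin htop' fun i ↦
    isArtinian_hahnExtension (hN i)
end

section
/- Let A be a ring such that the Laurent series ring A((x)) is a right semidistributive semilocal ring. Then A((x)) is a right Artinian ring. -/
/-!
Let `R = A((x))` and `J` its Jacobson radical. A distributive semisimple module over an Artinian
ring is cyclic, so if `R / J` is semisimple and `R` is a sum of distributive submodules, then every
one-sided ideal `X` of `R` on that side is finitely generated modulo `JX`. Nakayama's lemma then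
shows that no infinite family in `R` is irredundant, whereas a strictly increasing chain of
one-sided ideals of `A` would yield an irredundant family of lacunary series; hence `A` is
Noetherian.

Two distinct positive powers of `x` differ by a central unit, so modulo `J`, in an Artinian ring,
every `a ∈ A` becomes invertible after subtracting some power of `x`. As the inverse of `a - x ^ m`
has finitely many negative coefficients, `a ^ k ∈ a ^ (k + 1) A` for some `k`. Consequently the
leading coefficients of elements of `J` form a nil ideal, which is nilpotent by Levitzki's theorem.
All coefficients of elements of `J` lie in this ideal, so `J` is nilpotent. Thus `R` is
semiprimary with finitely generated one-sided ideals, and Hopkins–Levitzki applies.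
-/

namespace IsDistribModule

variable {R M N : Type*} [Ring R] [AddCommGroup M] [Module R M] [AddCommGroup N]

theorem of_injective [Module R N] (hM : IsDistribModule R M) {f : N →ₗ[R] M}
    (hf : Function.Injective f) : IsDistribModule R N := fun X Y Z =>
  Submodule.map_injective_of_injective hf <| by
    simp only [Submodule.map_inf f hf, Submodule.map_sup, hM _ _ _]

theorem of_surjective_s2 {S : Type*} [Ring S] [Module S N] {σ : R →+* S} [RingHomSurjective σ]
    (hM : IsDistribModule R M) {f : M →ₛₗ[σ] N} (hf : Function.Surjective f) :
    IsDistribModule S N := by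
  refine fun X Y Z => le_antisymm ?_ (le_inf (sup_le inf_le_left inf_le_left)
    (sup_le_sup inf_le_right inf_le_right))
  rintro _ ⟨hX, hYZ⟩
  obtain ⟨y', hy, z', hz, rfl⟩ := Submodule.mem_sup.1 hYZ
  obtain ⟨y, rfl⟩ := hf y'
  obtain ⟨z, rfl⟩ := hf z'
  have hyz : y + z ∈ X.comap f ⊓ Y.comap f ⊔ X.comap f ⊓ Z.comap f := by
    rw [← hM]
    exact ⟨show f (y + z) ∈ X by rwa [map_add], Submodule.add_mem_sup hy hz⟩
  obtain ⟨y', ⟨hXy', hy'⟩, z', ⟨hXz', hz'⟩, h⟩ := Submodule.mem_sup.1 hyz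
  rw [← map_add, ← h, map_add]
  exact Submodule.add_mem_sup ⟨hXy', hy'⟩ ⟨hXz', hz'⟩

theorem mem_span_singleton_add (hM : IsDistribModule R M) {x y : M}
    (hxy : Disjoint (R ∙ x) (R ∙ y)) : x ∈ R ∙ (x + y) := by
  have hx : x ∈ R ∙ x := Submodule.mem_span_singleton_self x
  have hy : y ∈ R ∙ y := Submodule.mem_span_singleton_self y
  have hmem : x ∈ (R ∙ x) ⊓ (R ∙ (x + y) ⊔ R ∙ y) :=
    ⟨hx, Submodule.mem_sup.2
      ⟨x + y, Submodule.mem_span_singleton_self _, -y, neg_mem hy, add_neg_cancel_right x y⟩⟩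
  rw [hM, hxy.eq_bot, sup_bot_eq] at hmem
  exact hmem.2

/-- The generator is an element whose annihilator is minimal. -/
theorem exists_span_singleton_eq_top [IsArtinianRing R] [IsSemisimpleModule R M]
    (hM : IsDistribModule R M) : ∃ q : M, R ∙ q = ⊤ := by
  obtain ⟨_, ⟨q, rfl⟩, hmin⟩ := WellFounded.has_min (wellFounded_lt (α := Ideal R))
    (Set.range (Ideal.torsionOf R M)) (Set.range_nonempty _)
  refine ⟨q, ?_⟩
  obtain ⟨D, hD⟩ := exists_isCompl (R ∙ q)
  suffices D = ⊥ by simpa only [this, sup_bot_eq] using hD.sup_eq_top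
  refine (Submodule.eq_bot_iff D).2 fun d hd => ?_
  have hdisj : Disjoint (R ∙ q) (R ∙ d) :=
    hD.disjoint.mono_right ((Submodule.span_singleton_le_iff_mem d D).2 hd)
  have eq_zero {r s : R} (h : r • q + s • d = 0) : r • q = 0 ∧ s • d = 0 := by
    have hq : r • q = 0 := Submodule.disjoint_def.1 hdisj _
      (Submodule.mem_span_singleton.2 ⟨r, rfl⟩)
      (Submodule.mem_span_singleton.2 ⟨-s, by rw [neg_smul, eq_neg_of_add_eq_zero_left h]⟩)
    exact ⟨hq, by rwa [hq, zero_add] at h⟩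
  have hle : Ideal.torsionOf R M (q + d) ≤ Ideal.torsionOf R M q := fun r h =>
    (eq_zero ((smul_add r q d).symm.trans h)).1
  have hann (r : R) (h : r • q = 0) : r • d = 0 := by
    have hqd : r • (q + d) = 0 := (hle.eq_of_not_lt (hmin _ ⟨q + d, rfl⟩)).ge h
    exact (eq_zero ((smul_add r q d).symm.trans hqd)).2
  obtain ⟨r, hr⟩ := Submodule.mem_span_singleton.1 (hM.mem_span_singleton_add hdisj)
  have hsub : (r - 1) • q + r • d = 0 := by
    rw [sub_smul, one_smul, sub_add_eq_add_sub, ← smul_add, hr, sub_self]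
  obtain ⟨hq, hrd⟩ := eq_zero hsub
  have hd' := hann _ hq
  rwa [sub_smul, one_smul, hrd, zero_sub, neg_eq_zero] at hd'

end IsDistribModule

/-- `X / JX` is finitely generated, stated without the quotient module so that Nakayama's lemma
and nilpotence of `J` apply directly to submodules of `M`. -/
def FGModulo {S M : Type*} [Ring S] [AddCommGroup M] [Module S M] (J : Ideal S)
    (X : Submodule S M) : Prop :=
  ∃ Y : Submodule S M, Y.FG ∧ Y ⊔ J • X = X

namespace FGModulo

variable {S M N : Type*} [Ring S] [AddCommGroup M] [Module S M] [AddCommGroup N] [Module S N]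
  {J : Ideal S} {X : Submodule S M}

theorem bot : FGModulo J (⊥ : Submodule S M) :=
  ⟨⊥, Submodule.fg_bot, by rw [Submodule.smul_bot, sup_bot_eq]⟩

theorem map (hX : FGModulo J X) (f : M →ₗ[S] N) : FGModulo J (X.map f) := by
  obtain ⟨Y, hY, h⟩ := hX
  exact ⟨Y.map f, hY.map f, by rw [← Submodule.map_smul'', ← Submodule.map_sup, h]⟩

theorem of_map_of_inf_ker (f : M →ₗ[S] N) (hmap : FGModulo J (X.map f))
    (hker : FGModulo J (X ⊓ LinearMap.ker f)) : FGModulo J X := by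
  obtain ⟨Y, hY, hYX⟩ := hmap
  obtain ⟨Z, hZ, hZX⟩ := hker
  obtain ⟨t, ht, rfl⟩ := Submodule.fg_def.1 hY
  obtain ⟨u, huX, hu, rfl⟩ : ∃ u ⊆ (X : Set M), u.Finite ∧ f '' u = t :=
    (Set.exists_subset_image_finite_and (p := fun s => s = t)).1
      ⟨t, Submodule.span_le.1 (le_sup_left.trans_eq hYX), ht, rfl⟩
  set V := Submodule.span S u ⊔ J • X with hV
  have hVX : V ≤ X := sup_le (Submodule.span_le.2 huX) Submodule.smul_le_right
  have hVmap : V.map f = X.map f := by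
    rw [hV, Submodule.map_sup, Submodule.map_span, Submodule.map_smul'', hYX]
  have hVker : V ⊔ X ⊓ LinearMap.ker f = X := by
    rw [inf_comm, ← sup_inf_assoc_of_le _ hVX, ← Submodule.comap_map_eq, hVmap,
      Submodule.comap_map_eq, inf_eq_right.2 le_sup_left]
  have hJ : J • (X ⊓ LinearMap.ker f) ≤ J • X := Submodule.smul_mono le_rfl inf_le_left
  refine ⟨Submodule.span S u ⊔ Z, (Submodule.fg_span hu).sup hZ, ?_⟩
  calc Submodule.span S u ⊔ Z ⊔ J • X
      = V ⊔ (Z ⊔ J • (X ⊓ LinearMap.ker f)) := by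
        rw [← sup_eq_left.2 hJ, hV]; ac_rfl
    _ = X := by rw [hZX, hVker]

theorem of_isDistribModule [J.IsTwoSided] [IsSemisimpleRing (S ⧸ J)]
    (hX : IsDistribModule S X) : FGModulo J X := by
  let π : X →ₛₗ[Ideal.Quotient.mk J] X ⧸ (J • ⊤ : Submodule S X) :=
    { toFun := Submodule.Quotient.mk
      map_add' := fun _ _ => rfl
      map_smul' := fun _ _ => rfl }
  have hπ : Function.Surjective π := Submodule.Quotient.mk_surjective _
  obtain ⟨q, hq⟩ := (hX.of_surjective_s2 hπ).exists_span_singleton_eq_top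
  obtain ⟨x, rfl⟩ := hπ q
  refine ⟨S ∙ (x : M), Submodule.fg_span_singleton _, le_antisymm ?_ fun y hy => ?_⟩
  · exact sup_le ((Submodule.span_singleton_le_iff_mem _ _).2 x.2) Submodule.smul_le_right
  obtain ⟨r, hr⟩ := Submodule.mem_span_singleton.1 (hq.ge (Submodule.mem_top (x := π ⟨y, hy⟩)))
  obtain ⟨r, rfl⟩ := Ideal.Quotient.mk_surjective r
  have hsub : (⟨y, hy⟩ : X) - r • x ∈ J • (⊤ : Submodule S X) :=
    (Submodule.Quotient.eq _).1 (hr.symm.trans (map_smulₛₗ π r x).symm)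
  have hJ : y - r • (x : M) ∈ J • X := by
    have := Submodule.mem_map_of_mem (f := X.subtype) hsub
    rwa [Submodule.map_smul'', Submodule.map_subtype_top] at this
  rw [← add_sub_cancel (r • (x : M)) y]
  exact Submodule.add_mem_sup (Submodule.mem_span_singleton.2 ⟨r, rfl⟩) hJ

theorem of_le_finset_sup [J.IsTwoSided] [IsSemisimpleRing (S ⧸ J)] {ι : Type*}
    {N : ι → Submodule S M} (hN : ∀ i, IsDistribModule S (N i)) {s : Finset ι}
    (hX : X ≤ s.sup N) : FGModulo J X := by
  classical
  induction s using Finset.induction_on generalizing X with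
  | empty => exact (le_bot_iff.1 hX) ▸ bot
  | insert i s _ ih =>
    rw [Finset.sup_insert] at hX
    have hmap : (s.sup N ⊓ (N i ⊔ X)).map (N i).mkQ = X.map (N i).mkQ := by
      apply Submodule.comap_injective_of_surjective (N i).mkQ_surjective
      rw [Submodule.comap_map_mkQ, Submodule.comap_map_mkQ, ← sup_inf_assoc_of_le _ le_sup_left,
        inf_eq_right.2 (sup_le le_sup_left hX)]
    refine of_map_of_inf_ker (N i).mkQ (hmap ▸ (ih inf_le_left).map _) (of_isDistribModule ?_)
    rw [Submodule.ker_mkQ]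
    exact (hN i).of_injective (Submodule.inclusion_injective inf_le_right)

theorem fg_of_isNilpotent (hX : FGModulo J X) (hJ : IsNilpotent J) : X.FG := by
  obtain ⟨Y, hY, hYX⟩ := hX
  have hle (n : ℕ) : X ≤ Y ⊔ J ^ n • X := by
    induction n with
    | zero => rw [Submodule.pow_zero, Submodule.one_smul]; exact le_sup_right
    | succ n ih =>
      calc X ≤ Y ⊔ J ^ n • X := ih
        _ = Y ⊔ J ^ n • (Y ⊔ J • X) := by rw [hYX]
        _ = Y ⊔ J ^ n • Y ⊔ J ^ (n + 1) • X := by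
          rw [Submodule.smul_sup, sup_assoc, Submodule.pow_succ, ← Submodule.mul_smul]
        _ = Y ⊔ J ^ (n + 1) • X := by rw [sup_eq_left.2 (Submodule.smul_le_right : J ^ n • Y ≤ Y)]
  obtain ⟨n, hn⟩ := hJ
  have hXY : X ≤ Y := by
    simpa only [hn, Submodule.zero_eq_bot, Submodule.bot_smul, sup_bot_eq] using hle n
  exact (le_sup_left.trans_eq hYX).antisymm hXY ▸ hY

theorem exists_mem_span_image_compl {ι : Type*} [Infinite ι] {f : ι → M}
    (hf : FGModulo (Ring.jacobson S) (Submodule.span S (Set.range f))) :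
    ∃ t, f t ∈ Submodule.span S (f '' {t}ᶜ) := by
  obtain ⟨Y, hY, hYf⟩ := hf
  rw [Submodule.span_range_eq_iSup] at hYf
  obtain ⟨s, hs⟩ := CompleteLattice.IsCompactElement.exists_finset_of_le_iSup _
    ((Submodule.fg_iff_compact Y).1 hY) (fun i => S ∙ f i) (le_sup_left.trans_eq hYf)
  obtain ⟨t, ht⟩ := Infinite.exists_notMem_finset s
  refine ⟨t, ?_⟩
  set W := Submodule.span S (f '' {t}ᶜ)
  have hYW : Y ≤ W := hs.trans <| iSup₂_le fun i hi =>
    Submodule.span_mono (Set.singleton_subset_iff.2 ⟨i, ne_of_mem_of_not_mem hi ht, rfl⟩)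
  have hspan : Submodule.span S (Set.range f) = (S ∙ f t) ⊔ W := by
    rw [← Submodule.span_union, ← Set.image_singleton, ← Set.image_union, Set.union_compl_self,
      Set.image_univ]
  have hle : S ∙ f t ≤ W ⊔ Ring.jacobson S • (S ∙ f t) := by
    rw [← Submodule.span_range_eq_iSup, hspan, Submodule.smul_sup] at hYf
    calc S ∙ f t ≤ Y ⊔ (Ring.jacobson S • (S ∙ f t) ⊔ Ring.jacobson S • W) :=
          le_sup_left.trans hYf.ge
      _ ≤ W ⊔ Ring.jacobson S • (S ∙ f t) := sup_le (hYW.trans le_sup_left)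
          (sup_le le_sup_right (Submodule.smul_le_right.trans le_sup_left))
  have hmap := Submodule.map_mono (f := W.mkQ) hle
  rw [Submodule.map_sup, Submodule.map_smul'', Submodule.mkQ_map_self, bot_sup_eq] at hmap
  have hbot := ((Submodule.fg_span_singleton (f t)).map W.mkQ).eq_bot_of_le_jacobson_smul hmap
  rw [← LinearMap.le_ker_iff_map, Submodule.ker_mkQ] at hbot
  exact hbot (Submodule.mem_span_singleton_self (f t))

end FGModulo

section Jacobson

variable {R : Type*} [Ring R]

theorem isUnit_of_sub_one_mem_jacobson {x : R} (hx : x - 1 ∈ Ring.jacobson R) : IsUnit x := by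
  have exists_left_inv {y : R} (hy : y - 1 ∈ Ring.jacobson R) : ∃ z, z * y = 1 := by
    rw [← Ideal.jacobson_bot] at hy
    obtain ⟨z, hz⟩ := Ideal.exists_mul_sub_mem_of_sub_one_mem_jacobson y hy
    exact ⟨z, sub_eq_zero.1 hz⟩
  obtain ⟨z, hzx⟩ := exists_left_inv hx
  have hz : z - 1 ∈ Ring.jacobson R := by
    rw [show z - 1 = -(z * (x - 1)) by rw [mul_sub, hzx, mul_one, neg_sub]]
    exact neg_mem (Ideal.mul_mem_left _ z hx)
  obtain ⟨w, hwz⟩ := exists_left_inv hz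
  exact ⟨⟨x, z, left_inv_eq_right_inv hwz hzx ▸ hwz, hzx⟩, rfl⟩

instance isLocalHom_mk_jacobson : IsLocalHom (Ideal.Quotient.mk (Ring.jacobson R)) := by
  refine ⟨fun x ⟨u, hu⟩ => ?_⟩
  obtain ⟨y, hy⟩ := Ideal.Quotient.mk_surjective (↑u⁻¹ : R ⧸ Ring.jacobson R)
  have isUnit_of_mk_eq_one {z : R} (hz : Ideal.Quotient.mk (Ring.jacobson R) z = 1) : IsUnit z :=
    isUnit_of_sub_one_mem_jacobson ((Ideal.Quotient.mk_eq_mk_iff_sub_mem _ _).1 hz)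
  obtain ⟨v, hv⟩ := (isUnit_of_mk_eq_one (z := x * y)
    (by rw [map_mul, ← hu, hy, Units.mul_inv])).exists_right_inv
  obtain ⟨w, hw⟩ := (isUnit_of_mk_eq_one (z := y * x)
    (by rw [map_mul, ← hu, hy, Units.inv_mul])).exists_left_inv
  exact isUnit_iff_exists_and_exists.2
    ⟨⟨y * v, by rw [← mul_assoc, hv]⟩, ⟨w * y, by rw [mul_assoc, hw]⟩⟩

theorem le_jacobson_of_isUnit_one_add {K : Ideal R} (hK : ∀ x ∈ K, IsUnit (1 + x)) :
    K ≤ Ring.jacobson R := fun x hx => by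
  rw [← Ideal.jacobson_bot, Ideal.mem_jacobson_iff]
  intro y
  obtain ⟨z, hz⟩ := (hK (y * x) (K.mul_mem_left y hx)).exists_left_inv
  exact ⟨z, sub_eq_zero.2 (by rw [mul_assoc, ← hz, mul_add, mul_one, add_comm])⟩

theorem le_jacobson_of_isNilpotent {K : Ideal R} (hK : IsNilpotent K) :
    K ≤ Ring.jacobson R := by
  obtain ⟨n, hn⟩ := hK
  refine le_jacobson_of_isUnit_one_add fun x hx => IsNilpotent.isUnit_one_add ⟨n, ?_⟩
  simpa only [hn, Submodule.zero_eq_bot, Submodule.mem_bot] using Ideal.pow_mem_pow hx n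

end Jacobson

theorem pow_two_mul_le_pow_of_mul_self_le {R : Type*} [Semiring R] {K L : Ideal R}
    (h : K * K ≤ L) (n : ℕ) : K ^ (2 * n) ≤ L ^ n := by
  induction n with
  | zero => rw [mul_zero, Submodule.pow_zero, Submodule.pow_zero]
  | succ n ih =>
    rw [mul_add_one, Submodule.pow_succ, Submodule.pow_succ, Submodule.pow_succ, mul_assoc]
    exact Ideal.mul_mono ih h

section Levitzki

variable {R : Type*} [Ring R] [IsNoetherianRing R]

theorem exists_ne_zero_forall_mul_mul_self_eq_zero {I : Ideal R} [I.IsTwoSided]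
    (hnil : ∀ a ∈ I, IsNilpotent a) (hI : I ≠ ⊥) :
    ∃ a ∈ I, a ≠ 0 ∧ ∀ u, a * u * a = 0 := by
  classical
  obtain ⟨a₀, ha₀I, ha₀⟩ := (Submodule.ne_bot_iff I).1 hI
  obtain ⟨_, ⟨a, ⟨haI, ha⟩, rfl⟩, hmax⟩ := WellFounded.has_min (wellFounded_gt (α := Ideal R))
    (Ideal.torsionOf R R '' {a | a ∈ I ∧ a ≠ 0}) ⟨_, a₀, ⟨ha₀I, ha₀⟩, rfl⟩
  refine ⟨a, haI, ha, fun u => ?_⟩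
  have hex : ∃ k, (a * u) ^ k * a = 0 :=
    (hnil (a * u) (I.mul_mem_right u haI)).imp fun k hk => by rw [hk, zero_mul]
  obtain ⟨k, hk⟩ : ∃ k, Nat.find hex = k + 1 :=
    Nat.exists_eq_add_one_of_ne_zero fun h => ha <| by
      simpa only [h, pow_zero, one_mul] using Nat.find_spec hex
  set b := (a * u) ^ k * a with hb
  have hb0 : b ≠ 0 := Nat.find_min hex (hk ▸ k.lt_succ_self)
  have haub : a * u * b = 0 := by
    rw [hb, ← mul_assoc, ← pow_succ', ← hk, Nat.find_spec hex]
  have hle : Ideal.torsionOf R R a ≤ Ideal.torsionOf R R b := fun r (hr : r * a = 0) =>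
    show r * b = 0 by rw [hb, mul_pow_mul, ← mul_assoc, hr, zero_mul]
  exact (hle.eq_of_not_lt (hmax _ ⟨b, ⟨I.mul_mem_left _ haI, hb0⟩, rfl⟩)).ge haub

theorem exists_isTwoSided_mul_self_eq_bot {I : Ideal R} [I.IsTwoSided]
    (hnil : ∀ a ∈ I, IsNilpotent a) (hI : I ≠ ⊥) :
    ∃ K : Ideal R, K.IsTwoSided ∧ K * K = ⊥ ∧ K ≠ ⊥ := by
  obtain ⟨a, -, ha, hsq⟩ := exists_ne_zero_forall_mul_mul_self_eq_zero hnil hI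
  set K := Ideal.span {a} * ⊤ with hK
  have hKa : K ≤ Ideal.torsionOf R R a := Ideal.mul_le.2 fun r hr s _ => by
    obtain ⟨c, rfl⟩ := Ideal.mem_span_singleton'.1 hr
    rw [Ideal.mem_torsionOf_iff, smul_eq_mul, mul_assoc, mul_assoc, ← mul_assoc a, hsq, mul_zero]
  have hKspan : K * Ideal.span {a} = ⊥ := eq_bot_iff.2 <| Ideal.mul_le.2 fun x hx y hy => by
    obtain ⟨c, rfl⟩ := Ideal.mem_span_singleton'.1 hy
    rw [← mul_assoc]
    exact hKa (K.mul_mem_right c hx)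
  refine ⟨K, inferInstance, ?_, (Submodule.ne_bot_iff K).2 ⟨a, ?_, ha⟩⟩
  · nth_rw 2 [hK]
    rw [← mul_assoc, hKspan, Submodule.bot_mul]
  · simpa only [mul_one] using
      Ideal.mul_mem_mul (Ideal.mem_span_singleton_self a) (Submodule.mem_top (x := (1 : R)))

theorem isNilpotent_of_forall_mem_isNilpotent {I : Ideal R} [I.IsTwoSided]
    (hnil : ∀ a ∈ I, IsNilpotent a) : IsNilpotent I := by
  obtain ⟨N, ⟨hN, n, hNn⟩, hmax⟩ := WellFounded.has_min (wellFounded_gt (α := Ideal R))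
    {K | K.IsTwoSided ∧ IsNilpotent K} ⟨⊥, inferInstance, 1, Submodule.pow_one _⟩
  suffices hIN : I ≤ N from ⟨n, le_bot_iff.1 ((Ideal.pow_right_mono hIN n).trans_eq hNn)⟩
  by_contra hIN
  have hmap : I.map (Ideal.Quotient.mk N) ≠ ⊥ := fun h => hIN <| by
    rwa [Ideal.map_eq_bot_iff_le_ker, Ideal.mk_ker] at h
  have hmapnil : ∀ a ∈ I.map (Ideal.Quotient.mk N), IsNilpotent a := by
    intro _ ha
    obtain ⟨a, haI, rfl⟩ := (Ideal.mem_map_iff_of_surjective _ Ideal.Quotient.mk_surjective).1 ha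
    exact (hnil a haI).map _
  have := isNoetherianRing_of_surjective R (R ⧸ N) (Ideal.Quotient.mk N)
    Ideal.Quotient.mk_surjective
  obtain ⟨K, hK, hKK, hKbot⟩ := exists_isTwoSided_mul_self_eq_bot hmapnil hmap
  set L := K.comap (Ideal.Quotient.mk N)
  have hLN : L * L ≤ N := Ideal.mul_le.2 fun x hx y hy => by
    rw [← Ideal.Quotient.eq_zero_iff_mem, map_mul, ← Submodule.mem_bot (R ⧸ N), ← hKK]
    exact Ideal.mul_mem_mul hx hy
  have hL : IsNilpotent L :=
    ⟨2 * n, le_bot_iff.1 ((pow_two_mul_le_pow_of_mul_self_le hLN n).trans_eq hNn)⟩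
  have hNL : N ≤ L := fun x hx => by
    rw [Ideal.mem_comap, Ideal.Quotient.eq_zero_iff_mem.2 hx]
    exact K.zero_mem
  have hLeq : N = L := hNL.eq_of_not_lt (hmax L ⟨inferInstance, hL⟩)
  refine hKbot ?_
  rw [← Ideal.map_comap_of_surjective _ Ideal.Quotient.mk_surjective K,
    Ideal.map_eq_bot_iff_le_ker, Ideal.mk_ker]
  exact hLeq.ge

end Levitzki

section CentralShift

open Polynomial in
theorem exists_isUnit_sub_algebraMap {k Q : Type*} [CommRing k] [Ring Q] [Algebra k Q]
    [IsArtinianRing Q] {c : ℕ → k} (hc : Pairwise fun i j => IsUnit (c i - c j)) (q : Q) :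
    ∃ n, IsUnit (q - algebraMap k Q (c n)) := by
  let P (n : ℕ) : k[X] := ∏ i ∈ Finset.range n, (X - C (c i))
  have hP (n : ℕ) : aeval q (P (n + 1)) = (q - algebraMap k Q (c n)) * aeval q (P n) := by
    simp only [P, Finset.prod_range_succ_comm, map_mul, map_sub, aeval_X, aeval_C]
  have hP' (n : ℕ) : aeval q (P (n + 1)) = aeval q (P n) * (q - algebraMap k Q (c n)) := by
    simp only [P, Finset.prod_range_succ, map_mul, map_sub, aeval_X, aeval_C]
  have hanti : Antitone fun n => Ideal.span {aeval q (P n)} := antitone_nat_of_succ_le fun n => by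
    rw [Ideal.span_singleton_le_iff_mem, hP]
    exact Ideal.mul_mem_left _ _ (Ideal.mem_span_singleton_self _)
  obtain ⟨n, hn⟩ := IsArtinian.monotone_stabilizes (⟨_, hanti⟩ : ℕ →o (Ideal Q)ᵒᵈ)
  have hmem : aeval q (P n) ∈ Ideal.span {aeval q (P (n + 1))} :=
    (hn (n + 1) n.le_succ).ge (Ideal.mem_span_singleton_self _)
  obtain ⟨r, hr⟩ := Ideal.mem_span_singleton'.1 hmem
  obtain ⟨a, b, hab⟩ : IsCoprime (P n) (X - C (c n)) := IsCoprime.prod_left fun i hi =>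
    isCoprime_X_sub_C_of_isUnit_sub (hc (Finset.mem_range.1 hi).ne)
  refine ⟨n, IsUnit.of_mul_eq_one_right (aeval q a * r * aeval q (P n) + aeval q b) ?_⟩
  have hab' := congrArg (aeval q) hab
  rw [map_add, map_mul, map_mul, map_sub, aeval_X, aeval_C, map_one] at hab'
  rw [add_mul, mul_assoc, ← hP', mul_assoc, hr, hab']

theorem isUnit_of_isUnit_coe_center {R : Type*} [Ring R] {z : Subring.center R}
    (hz : IsUnit (z : R)) : IsUnit z := by
  obtain ⟨u, hu⟩ := hz
  have hinv : (↑u⁻¹ : R) ∈ Subring.center R := Set.units_inv_mem_center (hu ▸ z.2)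
  exact .of_mul_eq_one ⟨_, hinv⟩ (Subtype.ext (by rw [Subring.coe_mul, ← hu, Units.mul_inv]; rfl))

theorem exists_isUnit_sub_of_mem_center {R : Type*} [Ring R] [IsArtinianRing (R ⧸ Ring.jacobson R)]
    {c : ℕ → R} (hc : ∀ n, c n ∈ Subring.center R)
    (hsub : Pairwise fun i j => IsUnit (c i - c j)) (q : R) : ∃ n, IsUnit (q - c n) := by
  obtain ⟨n, hn⟩ := exists_isUnit_sub_algebraMap (c := fun n => (⟨c n, hc n⟩ : Subring.center R))
    (fun i j hij => isUnit_of_isUnit_coe_center (hsub hij)) (Ideal.Quotient.mk (Ring.jacobson R) q)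
  refine ⟨n, isUnit_of_map_unit (Ideal.Quotient.mk (Ring.jacobson R)) _ ?_⟩
  rwa [map_sub]

end CentralShift

section Gap

variable {A : Type*} [Ring A]

/-- The lacunary series `∑ a k * x ^ 2 ^ k` over the `j`-th of infinitely many disjoint infinite
classes of exponents `k`, namely those with `k.unpair.1 = j`. -/
noncomputable def gapSeries (a : ℕ → A) (j : ℕ) : LaurentSeries A :=
  HahnSeries.ofPowerSeries ℤ A <| PowerSeries.mk <|
    Function.extend (2 ^ ·) (fun k => if k.unpair.1 = j then a k else 0) 0

theorem gapSeries_coeff_two_pow (a : ℕ → A) {j k : ℕ} (hk : k.unpair.1 = j) :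
    (gapSeries a j).coeff (2 ^ k) = a k := by
  rw [gapSeries, show (2 ^ k : ℤ) = (2 ^ k : ℕ) by norm_cast,
    HahnSeries.ofPowerSeries_apply_coeff, PowerSeries.coeff_mk,
    (Nat.pow_right_injective le_rfl).extend_apply, if_pos hk]

theorem exists_of_gapSeries_coeff_ne_zero {a : ℕ → A} {j : ℕ} {p : ℤ}
    (hp : (gapSeries a j).coeff p ≠ 0) : ∃ k : ℕ, k.unpair.1 = j ∧ p = 2 ^ k := by
  obtain ⟨m, rfl⟩ : ∃ m : ℕ, p = m := Int.eq_ofNat_of_zero_le <| by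
    by_contra hneg
    exact hp (by rw [gapSeries, PowerSeries.coeff_coe, if_pos (not_le.1 hneg)])
  rw [gapSeries, HahnSeries.ofPowerSeries_apply_coeff, PowerSeries.coeff_mk] at hp
  by_cases hm : ∃ k, 2 ^ k = m
  · obtain ⟨k, rfl⟩ := hm
    rw [(Nat.pow_right_injective le_rfl).extend_apply] at hp
    exact ⟨k, (ite_ne_right_iff.1 hp).1, by push_cast; rfl⟩
  · exact absurd (Function.extend_apply' _ _ _ hm) hp

theorem eventually_coeff_mul_gapSeries_mem {g : ℕ → Ideal A} (hg : Monotone g) {a : ℕ → A}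
    (ha : ∀ k, a k ∈ g (k + 1)) {j t : ℕ} (hjt : j ≠ t) (h : LaurentSeries A) :
    ∀ᶠ k in Filter.atTop, k.unpair.1 = t → (h * gapSeries a j).coeff (2 ^ k) ∈ g k := by
  filter_upwards [Filter.eventually_ge_atTop (-h.order).toNat] with k hk hkt
  rw [HahnSeries.coeff_mul]
  refine sum_mem fun pq hpq => ?_
  obtain ⟨hp, hq, hpq⟩ := Finset.mem_antidiagonal.1 hpq
  obtain ⟨i, hi, hqi⟩ := exists_of_gapSeries_coeff_ne_zero hq
  rw [hqi, gapSeries_coeff_two_pow a hi]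
  have hik : i < k := by
    refine lt_of_le_of_ne (not_lt.1 fun hki => hp ?_) fun h => hjt (by rw [← hi, ← hkt, h])
    have hgap : (2 : ℤ) ^ (k + 1) ≤ 2 ^ i := pow_le_pow_right₀ one_le_two hki
    have hk2 : (k : ℤ) < 2 ^ k := mod_cast k.lt_two_pow_self
    exact HahnSeries.coeff_eq_zero_of_lt_order (by rw [pow_succ] at hgap; lia)
  exact (g k).mul_mem_left _ (hg hik (ha i))

theorem eventually_coeff_mem_of_mem_span_gapSeries {g : ℕ → Ideal A} (hg : Monotone g)
    {a : ℕ → A} (ha : ∀ k, a k ∈ g (k + 1)) {t : ℕ} {G : LaurentSeries A}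
    (hG : G ∈ Ideal.span (gapSeries a '' {t}ᶜ)) (h : LaurentSeries A) :
    ∀ᶠ k in Filter.atTop, k.unpair.1 = t → (h * G).coeff (2 ^ k) ∈ g k := by
  induction hG using Submodule.span_induction generalizing h with
  | mem _ hx =>
    obtain ⟨j, hj, rfl⟩ := hx
    exact eventually_coeff_mul_gapSeries_mem hg ha hj h
  | zero => exact .of_forall fun k _ => by rw [mul_zero]; exact (g k).zero_mem
  | add x y _ _ hx hy =>
    filter_upwards [hx h, hy h] with k hxk hyk hkt
    rw [mul_add, HahnSeries.coeff_add]
    exact add_mem (hxk hkt) (hyk hkt)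
  | smul r x _ hx => simpa only [smul_eq_mul, mul_assoc] using hx (h * r)

theorem isNoetherianRing_of_laurentSeries_forall_exists_mem_span_image_compl
    (hA : ∀ f : ℕ → LaurentSeries A, ∃ t, f t ∈ Ideal.span (f '' {t}ᶜ)) :
    IsNoetherianRing A := by
  by_contra hN
  rw [isNoetherianRing_iff, isNoetherian_iff, RelEmbedding.wellFounded_iff_isEmpty,
    not_isEmpty_iff] at hN
  obtain ⟨g⟩ := hN
  have hg : StrictMono g := fun m n h => g.map_rel_iff.2 h
  choose a ha ha' using fun n : ℕ => SetLike.exists_of_lt (hg n.lt_succ_self)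
  obtain ⟨t, ht⟩ := hA (gapSeries a)
  obtain ⟨n, hn⟩ := Filter.eventually_atTop.1
    (eventually_coeff_mem_of_mem_span_gapSeries hg.monotone ha ht 1)
  have hpair : (Nat.pair t n).unpair.1 = t := by rw [Nat.unpair_pair]
  have hmem := hn _ (Nat.right_le_pair t n) hpair
  rw [one_mul, gapSeries_coeff_two_pow a hpair] at hmem
  exact ha' _ hmem

end Gap

section Monomial

variable {A : Type*} [Ring A]

theorem single_one_mem_center (n : ℤ) :
    HahnSeries.single n (1 : A) ∈ Subring.center (LaurentSeries A) :=
  Subring.mem_center_iff.2 fun f => by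
    ext i
    rw [← sub_add_cancel i n, HahnSeries.coeff_mul_single_add, HahnSeries.coeff_single_mul_add,
      mul_one, one_mul]

theorem isUnit_single_one (n : ℤ) : IsUnit (HahnSeries.single n (1 : A)) :=
  isUnit_iff_exists.2 ⟨HahnSeries.single (-n) 1, by
    simp only [HahnSeries.single_mul_single, add_neg_cancel, neg_add_cancel, mul_one,
      HahnSeries.single_zero_one, and_self]⟩

theorem isUnit_one_sub_single_one {n : ℕ} (hn : n ≠ 0) :
    IsUnit (1 - HahnSeries.single (n : ℤ) (1 : A)) := by
  have h : IsUnit (1 - PowerSeries.X ^ n : PowerSeries A) := by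
    rw [PowerSeries.isUnit_iff_constantCoeff, map_sub, map_pow, PowerSeries.constantCoeff_X,
      zero_pow hn, map_one, sub_zero]
    exact isUnit_one
  simpa only [map_sub, map_one, HahnSeries.ofPowerSeries_X_pow] using
    h.map (HahnSeries.ofPowerSeries ℤ A)

theorem isUnit_single_one_sub_single_one {m n : ℤ} (hmn : m ≠ n) :
    IsUnit (HahnSeries.single m (1 : A) - HahnSeries.single n 1) := by
  wlog h : m < n generalizing m n
  · rw [IsUnit.sub_iff]
    exact this hmn.symm (hmn.lt_or_gt.resolve_left h)
  obtain ⟨k, hk⟩ := Int.eq_ofNat_of_zero_le (sub_nonneg.2 h.le)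
  have hsub : HahnSeries.single m (1 : A) - HahnSeries.single n 1 =
      HahnSeries.single m 1 * (1 - HahnSeries.single (k : ℤ) 1) := by
    rw [mul_sub, mul_one, HahnSeries.single_mul_single, mul_one, ← hk, add_sub_cancel]
  rw [hsub]
  exact (isUnit_single_one m).mul (isUnit_one_sub_single_one (by lia))

variable [IsArtinianRing (LaurentSeries A ⧸ Ring.jacobson (LaurentSeries A))]

theorem exists_isUnit_C_sub_single_one (a : A) :
    ∃ m : ℕ, 0 < m ∧ IsUnit (HahnSeries.C a - HahnSeries.single (m : ℤ) 1 : LaurentSeries A) := by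
  obtain ⟨n, hn⟩ := exists_isUnit_sub_of_mem_center
    (c := fun n : ℕ => HahnSeries.single ((n + 1 : ℕ) : ℤ) (1 : A))
    (fun n => single_one_mem_center _)
    (fun i j hij => isUnit_single_one_sub_single_one (by simpa using hij)) (HahnSeries.C a)
  exact ⟨n + 1, n.succ_pos, hn⟩

theorem exists_pow_eq_pow_succ_mul (a : A) : ∃ k s, a ^ k = a ^ (k + 1) * s := by
  obtain ⟨m, hm, hunit⟩ := exists_isUnit_C_sub_single_one a
  obtain ⟨f, hf⟩ := hunit.exists_right_inv
  have hrec (i : ℤ) : a * f.coeff i - f.coeff (i - m) = (1 : LaurentSeries A).coeff i := by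
    rw [← hf, sub_mul, HahnSeries.coeff_sub, HahnSeries.C_apply,
      HahnSeries.coeff_single_zero_mul, HahnSeries.coeff_single_mul, one_mul]
  have hcoeff (k : ℕ) : f.coeff (-(m * (k + 1))) = a ^ k * (a * f.coeff 0 - 1) := by
    induction k with
    | zero =>
      have h := hrec 0
      rw [HahnSeries.coeff_one, if_pos rfl, sub_eq_iff_eq_add, ← sub_eq_iff_eq_add'] at h
      rw [pow_zero, one_mul, h, Nat.cast_zero, zero_add, mul_one, zero_sub]
    | succ k ih =>
      have h := hrec (-(m * (k + 1)))
      rw [HahnSeries.coeff_one, if_neg (neg_ne_zero.2 (by positivity)), sub_eq_zero, ih,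
        ← mul_assoc, ← pow_succ'] at h
      rw [h]
      congr 1
      push_cast
      ring
  refine ⟨(-f.order).toNat, f.coeff 0, ?_⟩
  have hlt : -(m * ((-f.order).toNat + 1) : ℤ) < f.order := by
    have : ((-f.order).toNat + 1 : ℤ) ≤ m * ((-f.order).toNat + 1) :=
      le_mul_of_one_le_left (by positivity) (mod_cast hm)
    lia
  have hzero := hcoeff (-f.order).toNat
  rw [HahnSeries.coeff_eq_zero_of_lt_order hlt, mul_sub, mul_one, ← mul_assoc, ← pow_succ] at hzero
  exact (sub_eq_zero.1 hzero.symm).symm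

end Monomial

section LeadingIdeal

variable {A : Type*} [Ring A]

/-- The ideal of constant terms of the power series lying in `J`; for an ideal `J` of `A((x))`
these are the leading coefficients of elements of `J`, since `J` absorbs powers of `x`. -/
noncomputable def leadingIdeal (J : Ideal (LaurentSeries A)) : Ideal A :=
  (J.comap (HahnSeries.ofPowerSeries ℤ A)).map PowerSeries.constantCoeff

theorem mem_leadingIdeal {J : Ideal (LaurentSeries A)} {a : A} :
    a ∈ leadingIdeal J ↔
      ∃ φ : PowerSeries A, HahnSeries.ofPowerSeries ℤ A φ ∈ J ∧ PowerSeries.constantCoeff φ = a :=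
  Ideal.mem_map_iff_of_surjective _ PowerSeries.constantCoeff_surj

instance (J : Ideal (LaurentSeries A)) [J.IsTwoSided] : (leadingIdeal J).IsTwoSided :=
  have : RingHomSurjective (PowerSeries.constantCoeff (R := A)) :=
    ⟨PowerSeries.constantCoeff_surj⟩
  inferInstanceAs (Ideal.map PowerSeries.constantCoeff _).IsTwoSided

theorem coeff_mem_leadingIdeal {J : Ideal (LaurentSeries A)} {f : LaurentSeries A} (hf : f ∈ J)
    {m : ℤ} (hm : ∀ i < m, f.coeff i = 0) : f.coeff m ∈ leadingIdeal J := by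
  refine mem_leadingIdeal.2 ⟨PowerSeries.mk fun n => f.coeff (m + n), ?_, by simp⟩
  convert J.mul_mem_left (HahnSeries.single (-m) 1) hf
  ext i
  rw [HahnSeries.coeff_single_mul, one_mul, PowerSeries.coeff_coe, sub_neg_eq_add, add_comm i]
  split_ifs with hi
  · exact (hm _ (by lia)).symm
  · rw [PowerSeries.coeff_mk, Int.natAbs_of_nonneg (not_lt.1 hi)]

theorem isUnit_one_sub_C_of_mem_leadingIdeal_jacobson {a : A}
    (ha : a ∈ leadingIdeal (Ring.jacobson (LaurentSeries A))) :
    IsUnit (1 - HahnSeries.C a : LaurentSeries A) := by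
  obtain ⟨φ, hφ, rfl⟩ := mem_leadingIdeal.1 ha
  have h : IsUnit (1 - PowerSeries.C (PowerSeries.constantCoeff φ) + φ) := by
    rw [PowerSeries.isUnit_iff_constantCoeff, map_add, map_sub, map_one,
      PowerSeries.constantCoeff_C, sub_add_cancel]
    exact isUnit_one
  have hmk : Ideal.Quotient.mk (Ring.jacobson (LaurentSeries A))
      (1 - HahnSeries.C (PowerSeries.constantCoeff φ)) = Ideal.Quotient.mk _
        (HahnSeries.ofPowerSeries ℤ A (1 - PowerSeries.C (PowerSeries.constantCoeff φ) + φ)) := by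
    rw [Ideal.Quotient.mk_eq_mk_iff_sub_mem, map_add, map_sub, map_one,
      HahnSeries.ofPowerSeries_C, sub_add_cancel_left]
    exact neg_mem hφ
  refine isUnit_of_map_unit (Ideal.Quotient.mk (Ring.jacobson (LaurentSeries A))) _ ?_
  rw [hmk]
  exact (h.map (HahnSeries.ofPowerSeries ℤ A)).map (Ideal.Quotient.mk _)

theorem isNilpotent_of_mem_leadingIdeal_jacobson
    [IsArtinianRing (LaurentSeries A ⧸ Ring.jacobson (LaurentSeries A))] {a : A}
    (ha : a ∈ leadingIdeal (Ring.jacobson (LaurentSeries A))) : IsNilpotent a := by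
  obtain ⟨k, s, hs⟩ := exists_pow_eq_pow_succ_mul a
  have hunit := isUnit_one_sub_C_of_mem_leadingIdeal_jacobson (Ideal.mul_mem_right s _ ha)
  have hzero : (HahnSeries.C (a ^ k) : LaurentSeries A) * (1 - HahnSeries.C (a * s)) = 0 := by
    rw [mul_sub, mul_one, ← map_mul, ← mul_assoc, ← pow_succ, ← hs, sub_self]
  exact ⟨k, HahnSeries.C_injective
    (((hunit.mul_left_eq_zero).1 hzero).trans (map_zero HahnSeries.C).symm)⟩

/-- The ideal of Laurent series all of whose coefficients lie in `I`, a candidate for the Jacobson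
radical when `I` is the ideal of its leading coefficients. -/
def coeffIdeal (I : Ideal A) [I.IsTwoSided] : Ideal (LaurentSeries A) where
  carrier := {f | ∀ i, f.coeff i ∈ I}
  add_mem' hf hg i := I.add_mem (hf i) (hg i)
  zero_mem' _ := I.zero_mem
  smul_mem' h f hf i := by
    rw [smul_eq_mul, HahnSeries.coeff_mul]
    exact I.sum_mem fun p _ => I.mul_mem_left _ (hf _)

theorem mem_coeffIdeal {I : Ideal A} [I.IsTwoSided] {f : LaurentSeries A} :
    f ∈ coeffIdeal I ↔ ∀ i, f.coeff i ∈ I :=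
  Iff.rfl

theorem coeffIdeal_pow_le (I : Ideal A) [I.IsTwoSided] (n : ℕ) :
    coeffIdeal I ^ n ≤ coeffIdeal (I ^ n) := by
  induction n with
  | zero => exact fun f _ i => by rw [Submodule.pow_zero, Ideal.one_eq_top]; exact Submodule.mem_top
  | succ n ih =>
    rw [Submodule.pow_succ]
    refine Ideal.mul_le.2 fun f hf g hg i => ?_
    rw [HahnSeries.coeff_mul, Submodule.pow_succ]
    exact Ideal.sum_mem _ fun p _ => Ideal.mul_mem_mul (ih hf _) (hg _)

theorem isNilpotent_coeffIdeal {I : Ideal A} [I.IsTwoSided] (hI : IsNilpotent I) :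
    IsNilpotent (coeffIdeal I) := by
  obtain ⟨n, hn⟩ := hI
  refine ⟨n, eq_bot_iff.2 ((coeffIdeal_pow_le I n).trans fun f hf => ?_)⟩
  ext i
  have h := mem_coeffIdeal.1 hf i
  rwa [hn] at h

theorem le_coeffIdeal_leadingIdeal {J : Ideal (LaurentSeries A)} [J.IsTwoSided]
    (hJ : coeffIdeal (leadingIdeal J) ≤ J) : J ≤ coeffIdeal (leadingIdeal J) := by
  have key (d : ℕ) : ∀ f ∈ J, ∀ m : ℤ, (∀ i < m, f.coeff i = 0) →
      f.coeff (m + d) ∈ leadingIdeal J := by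
    induction d with
    | zero => exact fun f hf m hm => by simpa using coeff_mem_leadingIdeal hf hm
    | succ d ih =>
      intro f hf m hm
      set g := HahnSeries.single m (f.coeff m)
      have hg : g ∈ coeffIdeal (leadingIdeal J) := fun i => by
        rw [HahnSeries.coeff_single]
        split_ifs
        exacts [coeff_mem_leadingIdeal hf hm, Ideal.zero_mem _]
      have hfg : ∀ i < m + 1, (f - g).coeff i = 0 := fun i hi => by
        obtain rfl | hi := (Int.lt_add_one_iff.1 hi).eq_or_lt
        · rw [HahnSeries.coeff_sub, HahnSeries.coeff_single_same, sub_self]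
        · rw [HahnSeries.coeff_sub, hm i hi, HahnSeries.coeff_single_of_ne hi.ne, sub_self]
      have h := add_mem (ih (f - g) (sub_mem hf (hJ hg)) (m + 1) hfg) (hg (m + 1 + d))
      rwa [HahnSeries.coeff_sub, sub_add_cancel, add_right_comm, add_assoc,
        ← Nat.cast_succ] at h
  intro f hf i
  by_cases hi : i < f.order
  · rw [HahnSeries.coeff_eq_zero_of_lt_order hi]
    exact Ideal.zero_mem _
  · obtain ⟨d, hd⟩ := Int.eq_ofNat_of_zero_le (sub_nonneg.2 (not_lt.1 hi))
    rw [← add_sub_cancel f.order i, hd]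
    exact key d f hf _ fun j hj => HahnSeries.coeff_eq_zero_of_lt_order hj

theorem isNilpotent_jacobson_laurentSeries [IsNoetherianRing A]
    [IsArtinianRing (LaurentSeries A ⧸ Ring.jacobson (LaurentSeries A))] :
    IsNilpotent (Ring.jacobson (LaurentSeries A)) := by
  set J := Ring.jacobson (LaurentSeries A)
  have hI : IsNilpotent (coeffIdeal (leadingIdeal J)) := isNilpotent_coeffIdeal <|
    isNilpotent_of_forall_mem_isNilpotent fun a ha => isNilpotent_of_mem_leadingIdeal_jacobson ha
  have hle := le_coeffIdeal_leadingIdeal (le_jacobson_of_isNilpotent hI : _ ≤ J)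
  obtain ⟨n, hn⟩ := hI
  exact ⟨n, le_bot_iff.1 ((Ideal.pow_right_mono hle n).trans_eq hn)⟩

end LeadingIdeal

theorem isArtinianRing_laurentSeries_of_iSup_isDistribModule {A : Type*} [Ring A]
    [IsSemisimpleRing (LaurentSeries A ⧸ Ring.jacobson (LaurentSeries A))] {ι : Type*}
    {N : ι → Ideal (LaurentSeries A)} (hN : iSup N = ⊤)
    (hd : ∀ i, IsDistribModule (LaurentSeries A) (N i)) : IsArtinianRing (LaurentSeries A) := by
  obtain ⟨s, hs⟩ := Submodule.exists_finset_of_mem_iSup N (hN ▸ Submodule.mem_top (x := 1))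
  rw [← Finset.sup_eq_iSup, ← Ideal.eq_top_iff_one] at hs
  have hfg (X : Ideal (LaurentSeries A)) : FGModulo (Ring.jacobson (LaurentSeries A)) X :=
    .of_le_finset_sup hd (le_top.trans_eq hs.symm)
  have : IsNoetherianRing A :=
    isNoetherianRing_of_laurentSeries_forall_exists_mem_span_image_compl fun f =>
      (hfg _).exists_mem_span_image_compl
  have hnil := isNilpotent_jacobson_laurentSeries (A := A)
  have : IsSemiprimaryRing (LaurentSeries A) := ⟨‹_›, hnil⟩
  exact IsSemiprimaryRing.isNoetherian_iff_isArtinian.1 ⟨fun X => (hfg X).fg_of_isNilpotent hnil⟩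

section Opposite

variable {R S : Type*} [Ring R] [Ring S]

theorem isSemisimpleRing_quotient_jacobson_of_surjective {T : Type*} [Ring T] [IsSemisimpleRing T]
    (φ : S →+* T) [IsLocalHom φ] (hφ : Function.Surjective φ) :
    IsSemisimpleRing (S ⧸ Ring.jacobson S) := by
  have hker : RingHom.ker φ ≤ Ring.jacobson S := le_jacobson_of_isUnit_one_add fun x hx =>
    isUnit_of_map_unit φ _ <| by
      rw [map_add, map_one, RingHom.mem_ker.1 hx, add_zero]
      exact isUnit_one
  have := (RingHom.quotientKerEquivOfSurjective hφ).symm.isSemisimpleRing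
  exact (Ideal.Quotient.factor hker).isSemisimpleRing_of_surjective
    (Ideal.Quotient.factor_surjective hker)

instance isLocalHom_op (φ : R →+* S) [IsLocalHom φ] : IsLocalHom (RingHom.op φ) :=
  ⟨fun x hx => isUnit_unop.1 (isUnit_of_map_unit φ x.unop hx.unop)⟩

theorem IsSemilocalRing.isSemisimpleRing_quotient_jacobson (hR : IsSemilocalRing R) :
    IsSemisimpleRing (R ⧸ Ring.jacobson R) := by
  rw [IsSemilocalRing, Ideal.jacobson_bot] at hR
  let e : (R ⧸ Ring.jacobson R) →ₛₗ[Ideal.Quotient.mk (Ring.jacobson R)] R ⧸ Ring.jacobson R :=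
    { AddMonoidHom.id _ with
      map_smul' := fun _ => Ideal.Quotient.mk_surjective.forall.2 fun _ => rfl }
  exact (e.isSemisimpleModule_iff_of_bijective Function.bijective_id).1 hR

theorem IsSemilocalRing.isSemisimpleRing_quotient_jacobson_of_op_equiv (hR : IsSemilocalRing R)
    (σ : Rᵐᵒᵖ ≃+* S) : IsSemisimpleRing (S ⧸ Ring.jacobson S) := by
  have := hR.isSemisimpleRing_quotient_jacobson
  refine isSemisimpleRing_quotient_jacobson_of_surjective
    ((RingHom.op (Ideal.Quotient.mk (Ring.jacobson R))).comp (σ.symm : S →+* Rᵐᵒᵖ)) ?_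
  intro y
  obtain ⟨x, hx⟩ := Ideal.Quotient.mk_surjective y.unop
  refine ⟨σ (.op x), MulOpposite.unop_injective ?_⟩
  rw [← hx, RingHom.comp_apply, RingEquiv.coe_toRingHom, σ.symm_apply_apply]
  rfl

/-- An isomorphism `Rᵐᵒᵖ ≃+* S` identifies `R`, as a right module over itself, with `S`, as a left
module over itself. -/
def opSemilinearMap (σ : Rᵐᵒᵖ ≃+* S) : R →ₛₗ[(σ : Rᵐᵒᵖ →+* S)] S where
  toFun x := σ (.op x)
  map_add' x y := by rw [MulOpposite.op_add, map_add]
  map_smul' r x := by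
    rw [MulOpposite.smul_eq_mul_unop, MulOpposite.op_mul, MulOpposite.op_unop, map_mul,
      smul_eq_mul, RingEquiv.coe_toRingHom]

theorem opSemilinearMap_bijective (σ : Rᵐᵒᵖ ≃+* S) : Function.Bijective (opSemilinearMap σ) :=
  σ.bijective.comp MulOpposite.op_bijective

end Opposite

/-- The opposite of `A((x))` is `Aᵐᵒᵖ((x))`, through coefficientwise `MulOpposite.op`; it turns
right ideals into left ideals. -/
def laurentSeriesOpEquiv (A : Type*) [Ring A] : (LaurentSeries A)ᵐᵒᵖ ≃+* LaurentSeries Aᵐᵒᵖ where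
  toFun f := f.unop.map (MulOpposite.opAddEquiv : A ≃+ Aᵐᵒᵖ)
  invFun f := .op (f.map (MulOpposite.opAddEquiv : A ≃+ Aᵐᵒᵖ).symm)
  left_inv f := MulOpposite.unop_injective <| by ext; rfl
  right_inv f := by ext; rfl
  map_add' f g := by ext; rfl
  map_mul' f g := by
    ext i
    simp only [HahnSeries.map_coeff, HahnSeries.coeff_mul, MulOpposite.unop_mul, map_sum]
    refine Finset.sum_nbij' Prod.swap Prod.swap ?_ ?_ (fun _ _ => rfl) (fun _ _ => rfl)
      (fun _ _ => rfl) <;>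
    simp +contextual [add_comm]

theorem stmt2_general (A : Type*) [Ring A] {ι : Type*}
    (N : ι → Submodule (LaurentSeries A)ᵐᵒᵖ (LaurentSeries A)) (hN : iSup N = ⊤)
    (hd : ∀ i, IsDistribModule (LaurentSeries A)ᵐᵒᵖ (N i))
    (hsl : IsSemilocalRing (LaurentSeries A)) :
    IsArtinian (LaurentSeries A)ᵐᵒᵖ (LaurentSeries A) := by
  let σ := laurentSeriesOpEquiv A
  have := hsl.isSemisimpleRing_quotient_jacobson_of_op_equiv σ
  have hN' : ⨆ i, (N i).map (opSemilinearMap σ) = ⊤ := by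
    rw [← Submodule.map_iSup, hN, Submodule.map_top,
      LinearMap.range_eq_top.2 (opSemilinearMap_bijective σ).surjective]
  have hd' (i : ι) : IsDistribModule _ ((N i).map (opSemilinearMap σ)) :=
    (hd i).of_surjective_s2 (f := (opSemilinearMap σ).submoduleMap (N i))
      ((opSemilinearMap σ).submoduleMap_surjective (N i))
  have := isArtinianRing_laurentSeries_of_iSup_isDistribModule hN' hd'
  exact ((opSemilinearMap σ).isArtinian_iff_of_bijective (opSemilinearMap_bijective σ)).2 this

/-- If the Laurent series ring `A((x))` is a right semidistributive semilocal ring,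
then `A((x))` is a right Artinian ring. -/
theorem stmt2 (A : Type*) [Ring A]
    (hsd : IsRightSemidistributiveRing (LaurentSeries A))
    (hsl : IsSemilocalRing (LaurentSeries A)) :
    IsArtinian (LaurentSeries A)ᵐᵒᵖ (LaurentSeries A) := by
  obtain ⟨_, N, -, hN, hd⟩ := hsd
  exact stmt2_general A N hN hd hsl
end

section
/- Let A be a ring. Then A is right Artinian if and only if the Laurent series ring A((x)) is right Artinian. -/
/-!
Send a right ideal `K` of `A((x))` to the right ideal of constant coefficients of the power series
in `K`. If this right ideal of `A` is finitely generated, lift its generators to power series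
`g₁, …, gₘ` in `K`: every power series `f` in a right ideal `K' ≥ K` with the same constant
coefficients can be written as `∑ gᵢ aᵢ + f' x` with `f'` again in `K'`, because `x` is invertible,
and iterating writes `f` as `∑ gᵢ bᵢ ∈ K`. So for right Noetherian `A`, in particular for right
Artinian `A`, the assignment is strictly monotone and descending chains of right ideals of `A((x))`
are no worse than those of `A`. Conversely a right ideal `I` of `A` is recovered from `I((x))` by
intersecting with `A`.
-/

open PowerSeries

/-- Right ideals of `R`, encoded as submodules of the right `R`-module `R`. -/
abbrev RightIdeal (R : Type*) [Semiring R] := Submodule Rᵐᵒᵖ R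

theorem RightIdeal.mul_mem_right {R : Type*} [Semiring R] (I : RightIdeal R) {x : R} (y : R)
    (hx : x ∈ I) : x * y ∈ I :=
  I.smul_mem (MulOpposite.op y) hx

theorem isNoetherian_op_self_of_isArtinian {R : Type*} [Ring R] [IsArtinian Rᵐᵒᵖ R] :
    IsNoetherian Rᵐᵒᵖ R := by
  let e : R ≃ₗ[Rᵐᵒᵖ] Rᵐᵒᵖ :=
    { MulOpposite.opAddEquiv with map_smul' := fun _ _ => rfl }
  have : IsArtinianRing Rᵐᵒᵖ := isArtinian_of_linearEquiv e
  exact isNoetherian_of_linearEquiv e.symm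

section RightSemilinearMap

variable {R S : Type*} [Semiring R] [Semiring S]

/-- A ring homomorphism as a semilinear map of right modules, used to take images and preimages of
right ideals. -/
def rightSemilinearMap (φ : R →+* S) : R →ₛₗ[RingHom.op φ] S where
  toFun := φ
  map_add' := map_add φ
  map_smul' c x := map_mul φ x c.unop

@[simp]
theorem rightSemilinearMap_apply (φ : R →+* S) (x : R) : rightSemilinearMap φ x = φ x := rfl

instance ringHomSurjective_op (φ : R →+* S) [RingHomSurjective φ] :
    RingHomSurjective (RingHom.op φ) where
  is_surjective y :=
    let ⟨x, hx⟩ := φ.surjective y.unop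
    ⟨MulOpposite.op x, congrArg MulOpposite.op hx⟩

end RightSemilinearMap

section PowerSeries

instance ringHomSurjective_constantCoeff {R : Type*} [Semiring R] :
    RingHomSurjective (constantCoeff (R := R)) :=
  ⟨fun a => ⟨C a, constantCoeff_C a⟩⟩

theorem exists_eq_sum_mul_of_forall_eq_sum_mul_C_add_mul_X {R ι : Type*} [Semiring R]
    {s : Finset ι} {g : ι → R⟦X⟧} {P : Set R⟦X⟧}
    (hP : ∀ f ∈ P, ∃ a : ι → R, ∃ f' ∈ P, f = ∑ i ∈ s, g i * C (a i) + f' * X)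
    {f : R⟦X⟧} (hf : f ∈ P) : ∃ b : ι → R⟦X⟧, f = ∑ i ∈ s, g i * b i := by
  choose! a next next_mem eq_next using hP
  let b (f : R⟦X⟧) (i : ι) : R⟦X⟧ := PowerSeries.mk fun k => a (next^[k] f) i
  have b_eq (f : R⟦X⟧) (i : ι) : b f i = b (next f) i * X + C (a f i) := by
    simpa [b] using eq_shift_mul_X_add_const (b f i)
  have sum_eq (f : R⟦X⟧) : ∑ i ∈ s, g i * b f i =
      ∑ i ∈ s, g i * C (a f i) + (∑ i ∈ s, g i * b (next f) i) * X := by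
    rw [Finset.sum_mul, ← Finset.sum_add_distrib]
    refine Finset.sum_congr rfl fun i _ => ?_
    rw [b_eq, mul_add, mul_assoc, add_comm]
  have coeff_eq (k : ℕ) : ∀ f ∈ P, coeff k f = coeff k (∑ i ∈ s, g i * b f i) := by
    induction k with
    | zero =>
      intro f hf
      conv_lhs => rw [eq_next f hf]
      rw [sum_eq, map_add, map_add, coeff_zero_mul_X, coeff_zero_mul_X]
    | succ k ih =>
      intro f hf
      conv_lhs => rw [eq_next f hf]
      rw [sum_eq, map_add, map_add, coeff_succ_mul_X, coeff_succ_mul_X, ih _ (next_mem f hf)]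
  exact ⟨b f, PowerSeries.ext fun k => coeff_eq k f hf⟩

variable {R : Type*} [Ring R]

theorem exists_eq_sum_mul_C_add_mul_X {ι : Type*} {s : Finset ι} {g : ι → R⟦X⟧} {f : R⟦X⟧}
    (hf : constantCoeff f ∈ Submodule.span Rᵐᵒᵖ ((fun i => constantCoeff (g i)) '' s)) :
    ∃ (a : ι → R) (f' : R⟦X⟧), f = ∑ i ∈ s, g i * C (a i) + f' * X := by
  obtain ⟨c, hc⟩ := Submodule.mem_span_image_finset_iff_exists_fun' Rᵐᵒᵖ |>.mp hf
  let r := f - ∑ i ∈ s, g i * C (c i).unop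
  have hr : constantCoeff r = 0 := by simp [r, ← hc]
  obtain ⟨f', hf'⟩ := X_dvd_iff.mpr hr
  refine ⟨fun i => (c i).unop, f', ?_⟩
  rw [(commute_X f').eq, ← hf', add_sub_cancel]

theorem le_of_map_constantCoeff_le {I J : RightIdeal R⟦X⟧} (hIJ : I ≤ J)
    (hJ : ∀ f, f * X ∈ J → f ∈ J) (hfg : (I.map (rightSemilinearMap constantCoeff)).FG)
    (hle : J.map (rightSemilinearMap constantCoeff) ≤ I.map (rightSemilinearMap constantCoeff)) :
    J ≤ I := by
  classical
  obtain ⟨s, hs⟩ := hfg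
  have hsI : (s : Set R) ⊆ constantCoeff '' (I : Set R⟦X⟧) := fun a ha =>
    hs.le (Submodule.subset_span ha)
  obtain ⟨t, htI, rfl⟩ := Finset.subset_set_image_iff.mp hsI
  rw [Finset.coe_image] at hs
  have sum_mem (b : R⟦X⟧ → R⟦X⟧) : ∑ g ∈ t, g * b g ∈ I :=
    I.sum_mem fun g hg => I.mul_mem_right _ (htI hg)
  have decomposition : ∀ f ∈ J, ∃ a : R⟦X⟧ → R, ∃ f' ∈ J, f = ∑ g ∈ t, g * C (a g) + f' * X := by
    intro f hf
    obtain ⟨a, f', hff'⟩ := exists_eq_sum_mul_C_add_mul_X (g := id)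
      (hs.ge (hle (Submodule.mem_map_of_mem hf)))
    refine ⟨a, f', hJ f' ?_, hff'⟩
    rw [← sub_eq_of_eq_add' hff']
    exact J.sub_mem hf (hIJ (sum_mem _))
  intro f hf
  obtain ⟨b, rfl⟩ := exists_eq_sum_mul_of_forall_eq_sum_mul_C_add_mul_X decomposition hf
  exact sum_mem b

end PowerSeries

section HahnSeries

variable {Γ R : Type*}

theorem commute_single_one [AddCommGroup Γ] [PartialOrder Γ] [IsOrderedAddMonoid Γ]
    [NonAssocSemiring R] (n : Γ) (f : HahnSeries Γ R) :
    Commute (HahnSeries.single n 1) f := by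
  ext k
  simp [HahnSeries.coeff_single_mul, HahnSeries.coeff_mul_single]

variable [AddCommMonoid Γ] [PartialOrder Γ] [IsOrderedCancelAddMonoid Γ] [Semiring R]

variable (Γ) in
/-- The right ideal `I⟦Γ⟧` of Hahn series all of whose coefficients lie in the right ideal `I`. -/
def hahnSeriesIdeal (I : RightIdeal R) : RightIdeal (HahnSeries Γ R) where
  carrier := {f | ∀ n, f.coeff n ∈ I}
  add_mem' hf hg n := I.add_mem (hf n) (hg n)
  zero_mem' _ := I.zero_mem
  smul_mem' c f hf n := by
    rw [MulOpposite.smul_eq_mul_unop, HahnSeries.coeff_mul]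
    exact I.sum_mem fun ij _ => I.mul_mem_right _ (hf ij.1)

theorem hahnSeriesIdeal_mono : Monotone (hahnSeriesIdeal Γ : RightIdeal R → _) :=
  fun _ _ h _ hf n => h (hf n)

theorem comap_C_hahnSeriesIdeal (I : RightIdeal R) :
    (hahnSeriesIdeal Γ I).comap (rightSemilinearMap HahnSeries.C) = I := by
  ext a
  refine ⟨fun ha => ?_, fun ha n => ?_⟩
  · simpa using ha 0
  · simp only [rightSemilinearMap_apply, HahnSeries.C_apply, HahnSeries.coeff_single]
    split_ifs
    exacts [ha, I.zero_mem]

theorem hahnSeriesIdeal_strictMono : StrictMono (hahnSeriesIdeal Γ : RightIdeal R → _) :=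
  hahnSeriesIdeal_mono.strictMono_of_injective
    (Function.LeftInverse.injective comap_C_hahnSeriesIdeal)

end HahnSeries

section LaurentSeries

variable {R : Type*}

section Semiring

variable [Semiring R]

/-- The right ideal of power series contained in a right ideal of Laurent series. -/
noncomputable def powerSeriesIdeal (K : RightIdeal (LaurentSeries R)) : RightIdeal R⟦X⟧ :=
  K.comap (rightSemilinearMap (HahnSeries.ofPowerSeries ℤ R))

theorem mem_powerSeriesIdeal {K : RightIdeal (LaurentSeries R)} {f : R⟦X⟧} :
    f ∈ powerSeriesIdeal K ↔ HahnSeries.ofPowerSeries ℤ R f ∈ K :=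
  Iff.rfl

theorem mul_X_mem_powerSeriesIdeal {K : RightIdeal (LaurentSeries R)} {f : R⟦X⟧}
    (hf : f * X ∈ powerSeriesIdeal K) : f ∈ powerSeriesIdeal K := by
  have := K.mul_mem_right (HahnSeries.single (-1) 1) hf
  simpa [mul_assoc, mem_powerSeriesIdeal] using this

theorem powerSeriesPart_mem_powerSeriesIdeal {K : RightIdeal (LaurentSeries R)}
    {f : LaurentSeries R} : f.powerSeriesPart ∈ powerSeriesIdeal K ↔ f ∈ K := by
  rw [mem_powerSeriesIdeal]
  constructor
  · intro hf
    rw [← f.single_order_mul_powerSeriesPart, (commute_single_one _ _).eq]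
    exact K.mul_mem_right _ hf
  · intro hf
    rw [f.ofPowerSeries_powerSeriesPart, (commute_single_one _ _).eq]
    exact K.mul_mem_right _ hf

theorem powerSeriesIdeal_le_powerSeriesIdeal {K L : RightIdeal (LaurentSeries R)} :
    powerSeriesIdeal K ≤ powerSeriesIdeal L ↔ K ≤ L := by
  refine ⟨fun h f hf => ?_, fun h => Submodule.comap_mono h⟩
  exact powerSeriesPart_mem_powerSeriesIdeal.mp (h (powerSeriesPart_mem_powerSeriesIdeal.mpr hf))

/-- The right ideal of constant coefficients of the power series in a right ideal `K` of Laurent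
series. As `X` is invertible, it consists of `0` and the leading coefficients of elements of `K`. -/
noncomputable def leadingCoeffIdeal (K : RightIdeal (LaurentSeries R)) : RightIdeal R :=
  (powerSeriesIdeal K).map (rightSemilinearMap constantCoeff)

theorem leadingCoeffIdeal_mono : Monotone (leadingCoeffIdeal (R := R)) :=
  fun _ _ h => Submodule.map_mono (powerSeriesIdeal_le_powerSeriesIdeal.mpr h)

end Semiring

variable [Ring R]

theorem le_of_leadingCoeffIdeal_le {K L : RightIdeal (LaurentSeries R)} (hKL : K ≤ L)
    (hfg : (leadingCoeffIdeal K).FG) (hle : leadingCoeffIdeal L ≤ leadingCoeffIdeal K) : L ≤ K :=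
  powerSeriesIdeal_le_powerSeriesIdeal.mp <|
    le_of_map_constantCoeff_le (powerSeriesIdeal_le_powerSeriesIdeal.mpr hKL)
      (fun _ => mul_X_mem_powerSeriesIdeal) hfg hle

theorem leadingCoeffIdeal_strictMono [IsNoetherian Rᵐᵒᵖ R] :
    StrictMono (leadingCoeffIdeal (R := R)) := fun _ _ hKL =>
  lt_of_le_not_ge (leadingCoeffIdeal_mono hKL.le) fun hle =>
    hKL.not_ge (le_of_leadingCoeffIdeal_le hKL.le (IsNoetherian.noetherian _) hle)

end LaurentSeries

/-- A ring `A` is right Artinian if and only if the Laurent series ring `A((x))` is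
right Artinian (a ring `B` is right Artinian when `B`, viewed as a right module over
itself, i.e. as a `Bᵐᵒᵖ`-module, is Artinian). -/
theorem stmt8 (A : Type*) [Ring A] :
    IsArtinian Aᵐᵒᵖ A ↔ IsArtinian (LaurentSeries A)ᵐᵒᵖ (LaurentSeries A) := by
  constructor
  · intro h
    have : IsNoetherian Aᵐᵒᵖ A := isNoetherian_op_self_of_isArtinian
    exact leadingCoeffIdeal_strictMono.wellFoundedLT
  · intro h
    exact (hahnSeriesIdeal_strictMono (Γ := ℤ)).wellFoundedLT
end
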